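/- arXiv:2405.06874 — 4 statements merged into one kernel-verified Lean document; each statement's English description precedes it below -/
import Mathlib

section
/- There exists a constant C > 0, independent of the polynomial degree and of the interval, such that for every natural number k ≥ 1, every bounded open interval I = (c, d) with c < d and h_I = d − c, and every real polynomial v of degree at most k, one has ‖v′‖_{L²(I)} ≤ C k² h_I^{−1} ‖v‖_{L²(I)}. -/
open MeasureTheory Polynomial

/-!
The estimate is reduced by an affine change of variables to `(0, 1)`, where the `k²` comes from
the shifted Legendre polynomials `Pₙ`. Three facts about them suffice:

* `Pₙ` is orthogonal to all polynomials of degree `< n` (Rodrigues' formula and `n` integrations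
  by parts, `unitInt_legendre_mul`);
* `∫ Pₙ² = 1 / (2n + 1)`, because `X Pₙ' - n Pₙ` has degree `< n` while
  `∫ (X Pₙ²)' = Pₙ(1)² = 1` (`unitInt_legendre_sq`);
* `∫ Pₙ'² = Pₙ(1) Pₙ'(1) - Pₙ(0) Pₙ'(0) = 2n(n+1)`, because `Pₙ''` has degree `< n`
  (`unitInt_derivative_legendre_sq`).

Hence `‖Pₙ'‖² = 2n(n+1)(2n+1) ‖Pₙ‖²`. Splitting `v = w + a Pₙ` with `deg w < n`, orthogonality and
the Cauchy-Schwarz inequality show that the best constant in `‖v'‖² ≤ S ‖v‖²` grows by at most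
`2n(n+1)(2n+1)` from degree `n - 1` to degree `n`. These increments sum to `k(k+1)²(k+2)`, which
is at most `12 k⁴`.
-/

/-- The linear functional `p ↦ ∫₀¹ p`. -/
noncomputable def unitInt : ℝ[X] →ₗ[ℝ] ℝ where
  toFun p := ∫ x in (0 : ℝ)..1, p.eval x
  map_add' p q := by
    simp only [eval_add]
    exact intervalIntegral.integral_add (p.continuous.intervalIntegrable _ _)
      (q.continuous.intervalIntegrable _ _)
  map_smul' a p := by
    simp [eval_smul]

lemma unitInt_apply (p : ℝ[X]) : unitInt p = ∫ x in (0 : ℝ)..1, p.eval x := rfl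

lemma unitInt_C_mul (a : ℝ) (p : ℝ[X]) : unitInt (C a * p) = a * unitInt p := by
  rw [← smul_eq_C_mul, map_smul, smul_eq_mul]

lemma unitInt_derivative (p : ℝ[X]) : unitInt (derivative p) = p.eval 1 - p.eval 0 := by
  rw [unitInt_apply]
  exact intervalIntegral.integral_eq_sub_of_hasDerivAt (fun x _ => p.hasDerivAt x)
    ((derivative p).continuous.intervalIntegrable _ _)

lemma unitInt_sq_nonneg (p : ℝ[X]) : 0 ≤ unitInt (p ^ 2) := by
  rw [unitInt_apply]
  refine intervalIntegral.integral_nonneg zero_le_one fun x _ => ?_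
  rw [eval_pow]
  positivity

/-- The shifted Legendre polynomial of degree `n` with real coefficients, normalised by the value
`1` at `0`. -/
noncomputable def legendre (n : ℕ) : ℝ[X] := (shiftedLegendre n).map (Int.castRingHom ℝ)

lemma coeff_legendre (n k : ℕ) :
    (legendre n).coeff k = (-1) ^ k * n.choose k * (n + k).choose n := by
  simp [legendre, coeff_shiftedLegendre]

lemma coeff_legendre_of_lt {n k : ℕ} (h : n < k) : (legendre n).coeff k = 0 := by
  simp [coeff_legendre, Nat.choose_eq_zero_of_lt h]

lemma coeff_legendre_self_ne_zero (n : ℕ) : (legendre n).coeff n ≠ 0 := by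
  have h : (n + n).choose n ≠ 0 := (Nat.choose_pos (by omega)).ne'
  simpa [coeff_legendre] using h

lemma legendre_symm (n : ℕ) : C ((-1) ^ n) * (legendre n).comp (1 - X) = legendre n := by
  have h := congrArg (Polynomial.map (Int.castRingHom ℝ))
    (neg_one_pow_mul_shiftedLegendre_comp_one_sub_X_eq n)
  simpa [legendre, Polynomial.map_comp] using h

lemma legendre_eval_zero (n : ℕ) : (legendre n).eval 0 = 1 := by
  rw [← coeff_zero_eq_eval_zero, coeff_legendre]
  simp

lemma derivative_legendre_eval_zero (n : ℕ) :
    (derivative (legendre n)).eval 0 = -(n * (n + 1)) := by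
  rw [← coeff_zero_eq_eval_zero, coeff_derivative, coeff_legendre]
  simp

lemma legendre_eval_one (n : ℕ) : (legendre n).eval 1 = (-1) ^ n := by
  rw [← legendre_symm]
  simp [legendre_eval_zero]

lemma derivative_legendre_eval_one (n : ℕ) :
    (derivative (legendre n)).eval 1 = (-1) ^ n * (n * (n + 1)) := by
  rw [← legendre_symm, derivative_C_mul, derivative_comp]
  simp [derivative_legendre_eval_zero]

/-- Rodrigues' formula over `ℝ`. -/
lemma rodrigues (n : ℕ) :
    C (n.factorial : ℝ) * legendre n = derivative^[n] (X ^ n * (1 - X) ^ n) := by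
  have h := congrArg (Polynomial.map (Int.castRingHom ℝ)) (factorial_mul_shiftedLegendre_eq n)
  rw [← iterate_derivative_map] at h
  simpa [legendre] using h

lemma eval_iterate_derivative_eq_zero {n j : ℕ} (hj : j < n) {B l : ℝ[X]} {x : ℝ}
    (hB : l ^ n ∣ B) (hx : l.eval x = 0) : (derivative^[j] B).eval x = 0 := by
  obtain ⟨r, hr⟩ := pow_sub_dvd_iterate_derivative_of_pow_dvd j hB
  rw [hr, eval_mul, eval_pow, hx, zero_pow (by omega), zero_mul]

lemma degree_le_of_degree_lt_succ {q : ℝ[X]} {j : ℕ} (hq : q.degree < ((j + 1 : ℕ) : WithBot ℕ)) :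
    q.degree ≤ j := by
  rw [degree_lt_iff_coeff_zero] at hq
  rw [degree_le_iff_coeff_zero]
  intro m hm
  exact hq m (by exact_mod_cast hm)

/-- Repeated integration by parts; the boundary terms vanish because `X ^ n * (1 - X) ^ n` vanishes
to order `n` at both endpoints. -/
lemma unitInt_iterate_derivative_mul (n j : ℕ) (hj : j ≤ n) (q : ℝ[X]) (hq : q.degree < j) :
    unitInt (derivative^[j] (X ^ n * (1 - X) ^ n) * q) = 0 := by
  induction j generalizing q with
  | zero =>
    have : q = 0 := by
      rw [← degree_eq_bot]
      exact Nat.WithBot.lt_zero_iff.1 hq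
    simp [this]
  | succ j ih =>
    rcases eq_or_ne q 0 with rfl | hq0
    · simp
    have hq' : (derivative q).degree < j := by
      refine (degree_derivative_lt hq0).trans_le ?_
      exact degree_le_of_degree_lt_succ hq
    have h := unitInt_derivative (derivative^[j] (X ^ n * (1 - X) ^ n) * q)
    rw [derivative_mul, map_add, ih (by omega) _ hq', add_zero, eval_mul, eval_mul,
      eval_iterate_derivative_eq_zero hj (dvd_mul_left _ _) (by simp : (1 - X : ℝ[X]).eval 1 = 0),
      eval_iterate_derivative_eq_zero hj (dvd_mul_right _ _) (eval_X (x := (0 : ℝ)))] at h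
    rw [Function.iterate_succ_apply', h]
    simp

/-- `legendre n` is orthogonal on `(0, 1)` to all polynomials of degree `< n`. -/
lemma unitInt_legendre_mul (n : ℕ) (q : ℝ[X]) (hq : q.degree < n) :
    unitInt (legendre n * q) = 0 := by
  have h := unitInt_iterate_derivative_mul n n le_rfl q hq
  rw [← rodrigues, mul_assoc, unitInt_C_mul] at h
  exact (mul_eq_zero.1 h).resolve_left (by exact_mod_cast n.factorial_ne_zero)

lemma neg_one_pow_mul_self (n : ℕ) : ((-1 : ℝ) ^ n) * (-1) ^ n = 1 := by
  rw [← mul_pow]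
  simp

lemma unitInt_legendre_sq (n : ℕ) : (2 * n + 1) * unitInt (legendre n ^ 2) = 1 := by
  set P := legendre n with hP
  have hdeg : (X * derivative P - C (n : ℝ) * P).degree < (n : WithBot ℕ) := by
    rw [degree_lt_iff_coeff_zero]
    intro m hm
    have hX : (X * derivative P).coeff m = m * P.coeff m := by
      cases m with
      | zero => simp
      | succ m => rw [coeff_X_mul, coeff_derivative]; push_cast; ring
    rw [coeff_sub, coeff_C_mul, hX]
    rcases hm.eq_or_lt with rfl | hm
    · ring
    · rw [hP, coeff_legendre_of_lt hm]; ring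
  have h1 := unitInt_legendre_mul n _ hdeg
  have h2 := unitInt_derivative (X * P ^ 2)
  have e1 : legendre n * (X * derivative P - C (n : ℝ) * P)
      = P * (X * derivative P) - C (n : ℝ) * P ^ 2 := by rw [← hP]; ring
  have e2 : derivative (X * P ^ 2) = P ^ 2 + C (2 : ℝ) * (P * (X * derivative P)) := by
    simp only [derivative_mul, derivative_X, derivative_pow, map_ofNat, Nat.cast_ofNat]
    ring
  rw [e1, map_sub, unitInt_C_mul] at h1
  rw [e2, map_add, unitInt_C_mul] at h2
  simp only [eval_mul, eval_X, eval_pow, hP, legendre_eval_one] at h2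
  have := neg_one_pow_mul_self n
  simp only [← hP] at h2
  linarith

lemma unitInt_derivative_legendre_sq (n : ℕ) :
    unitInt (derivative (legendre n) ^ 2) = 2 * n * (n + 1) := by
  set P := legendre n with hP
  have hP0 : P ≠ 0 := fun h => coeff_legendre_self_ne_zero n (by rw [← hP, h, coeff_zero])
  have hdeg : P.degree ≤ n := by
    rw [degree_le_iff_coeff_zero]
    intro m hm
    exact coeff_legendre_of_lt (by exact_mod_cast hm)
  have h1 : unitInt (P * derivative (derivative P)) = 0 :=
    unitInt_legendre_mul n _
      (((degree_derivative_le).trans_lt (degree_derivative_lt hP0)).trans_le hdeg)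
  have h2 := unitInt_derivative (P * derivative P)
  rw [derivative_mul, map_add, h1, add_zero, ← sq] at h2
  rw [h2, hP, eval_mul, eval_mul, legendre_eval_one, derivative_legendre_eval_one,
    legendre_eval_zero, derivative_legendre_eval_zero]
  linear_combination ((n : ℝ) * (n + 1)) * neg_one_pow_mul_self n

/-- The inverse inequality on `(0, 1)`. The summand `1` keeps the constant positive for `k = 0`, so
that the weighted Cauchy-Schwarz inequality applies in the inductive step. -/
lemma unitInt_derivative_sq_le (k : ℕ) (v : ℝ[X]) (hv : v.degree ≤ k) :
    unitInt (derivative v ^ 2) ≤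
      ((k : ℝ) * (k + 1) ^ 2 * (k + 2) + 1) * unitInt (v ^ 2) := by
  induction k generalizing v with
  | zero =>
    rw [eq_C_of_degree_le_zero hv, derivative_C]
    have := unitInt_sq_nonneg (C (v.coeff 0))
    simpa using this
  | succ k ih =>
    set P := legendre (k + 1) with hP
    set a : ℝ := v.coeff (k + 1) / P.coeff (k + 1) with ha
    set w : ℝ[X] := v - C a * P with hw
    have hwdeg : w.degree < ((k + 1 : ℕ) : WithBot ℕ) := by
      rw [degree_lt_iff_coeff_zero]
      intro m hm
      rw [hw, coeff_sub, coeff_C_mul]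
      rcases hm.eq_or_lt with rfl | hm
      · rw [ha, div_mul_cancel₀ _ (coeff_legendre_self_ne_zero (k + 1)), sub_self]
      · rw [hP, coeff_legendre_of_lt hm, coeff_eq_zero_of_degree_lt
          (hv.trans_lt (by exact_mod_cast hm))]
        ring
    have hwdeg' : w.degree ≤ k := degree_le_of_degree_lt_succ hwdeg
    have hw1 := ih w hwdeg'
    have horth := unitInt_legendre_mul (k + 1) w hwdeg
    have hN := unitInt_legendre_sq (k + 1)
    have hD := unitInt_derivative_legendre_sq (k + 1)
    rw [← hP] at horth hN hD
    have hvw : v = w + C a * P := by rw [hw]; ring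
    have hvN : unitInt (v ^ 2) = unitInt (w ^ 2) + a ^ 2 * unitInt (P ^ 2) := by
      have e : v ^ 2 = w ^ 2 + C (2 * a) * (P * w) + C (a ^ 2) * P ^ 2 := by
        rw [hvw]; simp only [map_mul, map_pow, map_ofNat]; ring
      rw [e, map_add, map_add, unitInt_C_mul, unitInt_C_mul, horth]
      ring
    have hvD : unitInt (derivative v ^ 2) = unitInt (derivative w ^ 2)
        + 2 * a * unitInt (derivative w * derivative P)
        + a ^ 2 * unitInt (derivative P ^ 2) := by
      have e : derivative v ^ 2 = derivative w ^ 2 + C (2 * a) * (derivative w * derivative P)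
          + C (a ^ 2) * derivative P ^ 2 := by
        rw [hvw, derivative_add, derivative_C_mul]
        simp only [map_mul, map_pow, map_ofNat]; ring
      rw [e, map_add, map_add, unitInt_C_mul, unitInt_C_mul]
    obtain ⟨S, hS⟩ : ∃ S : ℝ, S = (k : ℝ) * (k + 1) ^ 2 * (k + 2) + 1 := ⟨_, rfl⟩
    obtain ⟨T, hT⟩ : ∃ T : ℝ, T = 2 * ((k : ℝ) + 1) * (k + 2) * (2 * k + 3) := ⟨_, rfl⟩
    have hS0 : 0 < S := by rw [hS]; positivity
    have hT0 : 0 < T := by rw [hT]; positivity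
    have hST : ((k + 1 : ℕ) : ℝ) * ((k + 1 : ℕ) + 1) ^ 2 * ((k + 1 : ℕ) + 2) + 1 = S + T := by
      rw [hS, hT]; push_cast; ring
    have hDN : unitInt (derivative P ^ 2) = T * unitInt (P ^ 2) := by
      rw [hD, hT]
      push_cast at hN ⊢
      linear_combination (-2 * ((k : ℝ) + 1) * (k + 2)) * hN
    -- Nonnegativity of `∫ (T w' - S a P')²` is the weighted Cauchy-Schwarz bound on the cross term.
    have hcs : 0 ≤ T ^ 2 * unitInt (derivative w ^ 2)
        - 2 * S * T * a * unitInt (derivative w * derivative P)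
        + S ^ 2 * a ^ 2 * unitInt (derivative P ^ 2) := by
      have h := unitInt_sq_nonneg (C T * derivative w - C (S * a) * derivative P)
      have e : (C T * derivative w - C (S * a) * derivative P) ^ 2
          = C (T ^ 2) * derivative w ^ 2 - C (2 * S * T * a) * (derivative w * derivative P)
          + C (S ^ 2 * a ^ 2) * derivative P ^ 2 := by
        simp only [map_mul, map_pow, map_ofNat]; ring
      rwa [e, map_add, map_sub, unitInt_C_mul, unitInt_C_mul, unitInt_C_mul] at h
    rw [hST, hvD, hvN, hDN]
    rw [← hS] at hw1
    rw [hDN] at hcs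
    have h3 := mul_le_mul_of_nonneg_left hw1 (by positivity : 0 ≤ T * (S + T))
    refine le_of_mul_le_mul_left ?_ (mul_pos hS0 hT0)
    linarith

theorem hp_inverse_deriv_L2 :
    ∃ C : ℝ, 0 < C ∧
      ∀ (k : ℕ), 1 ≤ k → ∀ (c d : ℝ), c < d →
        ∀ v : Polynomial ℝ, v.degree ≤ (k : ℕ) →
          Real.sqrt (∫ x in Set.Ioo c d, (v.derivative.eval x) ^ 2) ≤
            C * (k : ℝ) ^ 2 * (d - c)⁻¹ *
              Real.sqrt (∫ x in Set.Ioo c d, (v.eval x) ^ 2) := by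
  refine ⟨4, by norm_num, fun k hk c d hcd v hv => ?_⟩
  have hh : 0 < d - c := sub_pos.2 hcd
  have hIoo (f : ℝ → ℝ) : ∫ x in Set.Ioo c d, f x
      = (d - c) * ∫ x in (0 : ℝ)..1, f ((d - c) * x + c) := by
    rw [← integral_Ioc_eq_integral_Ioo, ← intervalIntegral.integral_of_le hcd.le,
      intervalIntegral.integral_comp_mul_add _ hh.ne']
    simp [hh.ne']
  -- The pullback of `v` to the unit interval.
  set u : ℝ[X] := v.comp (C (d - c) * X + C c) with hu
  have hudeg : u.degree ≤ k := by
    rw [← natDegree_le_iff_degree_le] at hv ⊢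
    calc u.natDegree ≤ v.natDegree * (C (d - c) * X + C c).natDegree := natDegree_comp_le
      _ ≤ v.natDegree * 1 := Nat.mul_le_mul_left _ natDegree_linear_le
      _ ≤ k := by simpa using hv
  have hN : ∫ x in Set.Ioo c d, (v.eval x) ^ 2 = (d - c) * unitInt (u ^ 2) := by
    rw [hIoo, unitInt_apply]
    simp [hu]
  have hD : ∫ x in Set.Ioo c d, (v.derivative.eval x) ^ 2
      = (d - c)⁻¹ * unitInt (derivative u ^ 2) := by
    have e : derivative u ^ 2
        = C ((d - c) ^ 2) * ((derivative v).comp (C (d - c) * X + C c)) ^ 2 := by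
      rw [hu, derivative_comp]
      simp only [derivative_add, derivative_C_mul, derivative_X, derivative_C, map_pow]
      ring
    rw [hIoo, e, unitInt_C_mul, unitInt_apply]
    simp only [eval_pow, eval_comp, eval_add, eval_mul, eval_C, eval_X]
    field_simp
  have hk1 : (1 : ℝ) ≤ k := by exact_mod_cast hk
  have hconst : (k : ℝ) * (k + 1) ^ 2 * (k + 2) + 1 ≤ 16 * (k : ℝ) ^ 4 := by
    have h1 : ((k : ℝ) + 1) ^ 2 ≤ (2 * k) ^ 2 := by gcongr; linarith
    have h2 : (k : ℝ) + 2 ≤ 3 * k := by linarith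
    have h3 : (k : ℝ) * (k + 1) ^ 2 * (k + 2) ≤ k * (2 * k) ^ 2 * (3 * k) := by gcongr
    have h4 : (1 : ℝ) ≤ k ^ 4 := one_le_pow₀ hk1
    linarith
  have hmain : unitInt (derivative u ^ 2) ≤ 16 * (k : ℝ) ^ 4 * unitInt (u ^ 2) :=
    (unitInt_derivative_sq_le k u hudeg).trans
      (mul_le_mul_of_nonneg_right hconst (unitInt_sq_nonneg u))
  refine Real.sqrt_le_iff.2 ⟨by positivity, ?_⟩
  rw [mul_pow, Real.sq_sqrt (by rw [hN]; exact mul_nonneg hh.le (unitInt_sq_nonneg u)), hN, hD]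
  calc (d - c)⁻¹ * unitInt (derivative u ^ 2)
      ≤ (d - c)⁻¹ * (16 * (k : ℝ) ^ 4 * unitInt (u ^ 2)) := by gcongr
    _ = (4 * (k : ℝ) ^ 2 * (d - c)⁻¹) ^ 2 * ((d - c) * unitInt (u ^ 2)) := by
      field_simp
      ring
end

section
/- There exists a constant C > 0, independent of the polynomial degree and of the interval, such that for every natural number k ≥ 1, every bounded open interval I = (c, d) with c < d and h_I = d − c, and every real polynomial v of degree at most k, one has ‖v‖_{L∞(I)} ≤ C k h_I^{−1/2} ‖v‖_{L²(I)}. -/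
/-!
The pointwise bound `(d - c) v(x)² ≤ (k + 1)² ∫_c^d v²` holds for every `x`, which gives `C = 2`.

It comes from an endpoint estimate on the unit interval, `w(0)² ≤ (k + 1)² ∫₀¹ w²` for
`deg w ≤ k` (`sq_eval_zero_le`). Rescaling it to the segments from `x` to `d` and from `x` to `c`
bounds `(d - x) v(x)²` and `(x - c) v(x)²`, and the two bounds add up, so the supremum over the
interior costs nothing beyond the endpoint case.

The endpoint estimate is Cauchy–Schwarz for the reproducing kernel at `0`: a polynomial `K` of
degree at most `k` with `∫₀¹ w K = w(0)` for all `w` of degree at most `k`, whence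
`∫₀¹ K² = K(0) = (k + 1)²`. Writing `K = ∑ cᵢ xⁱ`, the reproducing property on monomials says
`∑ cᵢ / (m + i + 1)` is `1` for `m = 0` and `0` for `1 ≤ m ≤ k`. Hence the `cᵢ` are the residues in
the partial fraction expansion of
`(-1)ᵏ (k + 1) ∏_{1 ≤ j ≤ k} (x - j) / ∏_{0 ≤ i ≤ k} (x + i + 1)`,
which Lagrange interpolation of the numerator at the nodes `-(i + 1)` provides
(`exists_kernel_coeff`).
-/

open MeasureTheory Polynomial

open Finset in
/-- The coefficients of the reproducing kernel at `0` for polynomials of degree at most `k` in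
`L²(0, 1)`; the value of `c 0` is the value of the kernel at `0`. -/
lemma exists_kernel_coeff (k : ℕ) : ∃ c : ℕ → ℝ, c 0 = ((k : ℝ) + 1) ^ 2 ∧
    ∀ m ≤ k, ∑ i ∈ range (k + 1), c i * ((m : ℝ) + i + 1)⁻¹ = if m = 0 then 1 else 0 := by
  set N : ℝ[X] := C ((-1) ^ k * ((k : ℝ) + 1)) * ∏ j ∈ range k, (X - C ((j : ℝ) + 1)) with hN
  have hNe : ∀ x : ℝ, N.eval x = (-1) ^ k * ((k : ℝ) + 1) * ∏ j ∈ range k, (x - ((j : ℝ) + 1)) := by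
    intro x
    simp [hN, eval_prod]
  set p : ℕ → ℝ := fun i => -((i : ℝ) + 1) with hp
  have hinj : Set.InjOn p (range (k + 1)) := by
    intro a _ b _ hab
    simpa [hp] using hab
  have hdeg : N.degree < (range (k + 1)).card := by
    have h1 : N.degree ≤ (k : ℕ) := by
      have hA : (-1 : ℝ) ^ k * ((k : ℝ) + 1) ≠ 0 :=
        mul_ne_zero (pow_ne_zero _ (by norm_num)) (by positivity)
      rw [hN, degree_C_mul hA, degree_prod]
      simp only [degree_X_sub_C, sum_const, card_range, nsmul_eq_mul, mul_one]
      exact le_rfl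
    rw [card_range]
    exact h1.trans_lt (by exact_mod_cast Nat.lt_succ_self k)
  have hinterp := Lagrange.eq_interpolate (f := N) hinj hdeg
  refine ⟨fun i => Lagrange.nodalWeight (range (k + 1)) p i * N.eval (p i), ?_, ?_⟩
  · have hfac : ∀ n : ℕ, ∏ j ∈ range n, ((j : ℝ) + 1) = n.factorial := by
      intro n
      exact_mod_cast Finset.prod_range_add_one_eq_factorial n
    have h1 : Lagrange.nodalWeight (range (k + 1)) p 0 = ((k.factorial : ℝ))⁻¹ := by
      rw [Lagrange.nodalWeight, range_eq_Ico, ← Finset.insert_Ico_add_one_left_eq_Ico (Nat.succ_pos k),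
        Finset.erase_insert (by simp), ← hfac, ← prod_inv_distrib, Finset.prod_Ico_eq_prod_range]
      refine prod_congr (by simp) fun j _ => ?_
      simp only [hp]; push_cast; ring_nf
    have h2 : N.eval (p 0) = ((k : ℝ) + 1) * (k + 1).factorial := by
      rw [hNe, ← hfac, prod_range_succ']
      have : ∀ j ∈ range k, p 0 - ((j : ℝ) + 1) = (-1) * (((j + 1 : ℕ) : ℝ) + 1) := by
        intro j _
        simp only [hp]; push_cast; ring
      rw [prod_congr rfl this, prod_mul_distrib]
      simp only [prod_const, card_range]
      have h3 : ((-1 : ℝ) ^ k) * (-1) ^ k = 1 := by rw [← mul_pow]; simp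
      push_cast
      linear_combination ((k : ℝ) + 1) * (∏ j ∈ range k, ((j : ℝ) + 1 + 1)) * h3
    have hk : (k.factorial : ℝ) ≠ 0 := by positivity
    simp only [h1, h2, Nat.factorial_succ]
    push_cast
    field_simp
  · intro m hm
    have hne : ∀ i ∈ range (k + 1), (m : ℝ) ≠ p i := by
      intro i _
      have : (0 : ℝ) < (m : ℝ) + i + 1 := by positivity
      simp only [hp]
      intro h
      linarith
    have key := Lagrange.eval_interpolate_not_at_node (s := range (k + 1)) (v := p)
      (fun i => N.eval (p i)) hne
    rw [← hinterp, Lagrange.eval_nodal] at key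
    have hsum : ∑ i ∈ range (k + 1), Lagrange.nodalWeight (range (k + 1)) p i * N.eval (p i) *
        ((m : ℝ) + i + 1)⁻¹ = ∑ i ∈ range (k + 1),
          Lagrange.nodalWeight (range (k + 1)) p i * ((m : ℝ) - p i)⁻¹ * N.eval (p i) := by
      refine sum_congr rfl fun i _ => ?_
      simp only [hp]
      rw [show (m : ℝ) - -((i : ℝ) + 1) = m + i + 1 by ring]
      ring
    rw [hsum]
    have hprod : ∏ i ∈ range (k + 1), ((m : ℝ) - p i) ≠ 0 :=
      prod_ne_zero_iff.mpr fun i hi => sub_ne_zero.mpr (hne i hi)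
    apply mul_left_cancel₀ hprod
    rw [← key, hNe]
    split_ifs with h0
    · subst h0
      have h3 : ((-1 : ℝ) ^ k) * (-1) ^ k = 1 := by rw [← mul_pow]; simp
      have h4 : ∏ j ∈ range k, (((0 : ℕ) : ℝ) - ((j : ℝ) + 1)) =
          (-1) ^ k * ∏ j ∈ range k, ((j : ℝ) + 1) := by
        rw [← card_range k, ← prod_const, card_range, ← prod_mul_distrib]
        refine prod_congr rfl fun j _ => ?_
        push_cast; ring
      have h5 : ∏ i ∈ range (k + 1), (((0 : ℕ) : ℝ) - p i) = ∏ j ∈ range (k + 1), ((j : ℝ) + 1) := by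
        refine prod_congr rfl fun j _ => ?_
        simp [hp]
      rw [h4, h5, prod_range_succ]
      linear_combination ((k : ℝ) + 1) * (∏ j ∈ range k, ((j : ℝ) + 1)) * h3
    · rw [prod_eq_zero (i := m - 1) (by rw [mem_range]; omega)]
      · simp
      · rw [Nat.cast_sub (by omega)]; simp

/-- The reproducing kernel at the endpoint `0` for polynomials of degree at most `k`. -/
lemma exists_kernel (k : ℕ) : ∃ K : ℝ[X], K.degree ≤ (k : ℕ) ∧ K.eval 0 = ((k : ℝ) + 1) ^ 2 ∧
    ∀ w : ℝ[X], w.degree ≤ (k : ℕ) → ∫ x in (0 : ℝ)..1, w.eval x * K.eval x = w.eval 0 := by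
  obtain ⟨c, hc0, hc⟩ := exists_kernel_coeff k
  have hKe : ∀ x : ℝ, (∑ i ∈ Finset.range (k + 1), C (c i) * X ^ i : ℝ[X]).eval x =
      ∑ i ∈ Finset.range (k + 1), c i * x ^ i := by
    intro x
    simp [eval_finsetSum]
  refine ⟨∑ i ∈ Finset.range (k + 1), C (c i) * X ^ i, ?_, ?_, ?_⟩
  · refine (degree_sum_le _ _).trans (Finset.sup_le fun i hi => ?_)
    refine (degree_C_mul_X_pow_le _ _).trans ?_
    exact_mod_cast Nat.lt_succ_iff.mp (Finset.mem_range.mp hi)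
  · rw [hKe, Finset.sum_range_succ']
    simp [hc0]
  · intro w hw
    have hwn : w.natDegree < k + 1 := Nat.lt_succ_of_le (natDegree_le_of_degree_le hw)
    have hexp : ∀ x : ℝ, w.eval x * (∑ i ∈ Finset.range (k + 1), C (c i) * X ^ i : ℝ[X]).eval x =
        ∑ m ∈ Finset.range (k + 1), ∑ i ∈ Finset.range (k + 1),
          w.coeff m * c i * x ^ (m + i) := by
      intro x
      rw [hKe, eval_eq_sum_range' hwn, Finset.sum_mul_sum]
      refine Finset.sum_congr rfl fun m _ => Finset.sum_congr rfl fun i _ => ?_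
      ring
    simp only [hexp]
    rw [intervalIntegral.integral_finsetSum
      (fun m _ => Continuous.intervalIntegrable (by fun_prop) _ _)]
    have hm : ∀ m ∈ Finset.range (k + 1),
        ∫ x in (0 : ℝ)..1, ∑ i ∈ Finset.range (k + 1), w.coeff m * c i * x ^ (m + i) =
          w.coeff m * if m = 0 then 1 else 0 := by
      intro m hm
      rw [intervalIntegral.integral_finsetSum
        (fun i _ => Continuous.intervalIntegrable (by fun_prop) _ _),
        ← hc m (Nat.lt_succ_iff.mp (Finset.mem_range.mp hm)), Finset.mul_sum]
      refine Finset.sum_congr rfl fun i _ => ?_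
      rw [intervalIntegral.integral_const_mul, integral_pow]
      simp
      ring
    rw [Finset.sum_congr rfl hm]
    simp [coeff_zero_eq_eval_zero]

lemma sq_eval_zero_le (k : ℕ) (w : ℝ[X]) (hw : w.degree ≤ (k : ℕ)) :
    w.eval 0 ^ 2 ≤ ((k : ℝ) + 1) ^ 2 * ∫ x in (0 : ℝ)..1, w.eval x ^ 2 := by
  obtain ⟨K, hKd, hK0, hK⟩ := exists_kernel k
  have hwK := hK w hw
  have hKK := hK K hKd
  rw [hK0] at hKK
  -- Cauchy–Schwarz, as nonnegativity of `∫ ((k + 1)² w - w(0) K)²`.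
  have hpos : 0 ≤ ∫ x in (0 : ℝ)..1, (((k : ℝ) + 1) ^ 2 * w.eval x - w.eval 0 * K.eval x) ^ 2 :=
    intervalIntegral.integral_nonneg (by norm_num) fun x _ => sq_nonneg _
  have hexp : ∀ x : ℝ, (((k : ℝ) + 1) ^ 2 * w.eval x - w.eval 0 * K.eval x) ^ 2 =
      ((k : ℝ) + 1) ^ 4 * w.eval x ^ 2 - 2 * ((k : ℝ) + 1) ^ 2 * w.eval 0 * (w.eval x * K.eval x) +
        w.eval 0 ^ 2 * (K.eval x * K.eval x) := by
    intro x
    ring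
  simp only [hexp] at hpos
  rw [intervalIntegral.integral_add (Continuous.intervalIntegrable (by fun_prop) _ _)
      (Continuous.intervalIntegrable (by fun_prop) _ _),
    intervalIntegral.integral_sub (Continuous.intervalIntegrable (by fun_prop) _ _)
      (Continuous.intervalIntegrable (by fun_prop) _ _)] at hpos
  simp only [intervalIntegral.integral_const_mul] at hpos
  rw [hwK, hKK] at hpos
  have hk : (0 : ℝ) < ((k : ℝ) + 1) ^ 2 := by positivity
  refine le_of_mul_le_mul_left ?_ hk
  linear_combination hpos

/-- The endpoint estimate transported to the segment from `a` to `b` by an affine map; no order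
between `a` and `b` is assumed, so `a` may be either endpoint. -/
lemma sq_eval_le_unit (k : ℕ) (v : ℝ[X]) (hv : v.degree ≤ (k : ℕ)) (a b : ℝ) :
    v.eval a ^ 2 ≤ ((k : ℝ) + 1) ^ 2 * ∫ t in (0 : ℝ)..1, v.eval (a + (b - a) * t) ^ 2 := by
  have hd : (v.comp (C a + C (b - a) * X)).degree ≤ (k : ℕ) := by
    refine degree_le_of_natDegree_le (natDegree_comp_le.trans ?_)
    have h1 : (C a + C (b - a) * X : ℝ[X]).natDegree ≤ 1 := by
      rw [add_comm]; exact natDegree_linear_le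
    calc _ ≤ v.natDegree * 1 := Nat.mul_le_mul_left _ h1
      _ ≤ k := by rw [mul_one]; exact natDegree_le_of_degree_le hv
  simpa [eval_comp] using sq_eval_zero_le k _ hd

lemma length_mul_sq_eval_le (k : ℕ) (v : ℝ[X]) (hv : v.degree ≤ (k : ℕ)) {c d x : ℝ}
    (hcx : c ≤ x) (hxd : x ≤ d) :
    (d - c) * v.eval x ^ 2 ≤ ((k : ℝ) + 1) ^ 2 * ∫ y in c..d, v.eval y ^ 2 := by
  have hscale : ∀ b : ℝ, (b - x) * ∫ t in (0 : ℝ)..1, v.eval (x + (b - x) * t) ^ 2 =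
      ∫ y in x..b, v.eval y ^ 2 := by
    intro b
    have := intervalIntegral.mul_integral_comp_add_mul (a := 0) (b := 1)
      (f := fun y => v.eval y ^ 2) (c := b - x) (d := x)
    simpa using this
  have h1 := mul_le_mul_of_nonneg_left (sq_eval_le_unit k v hv x d) (sub_nonneg.mpr hxd)
  have h2 := mul_le_mul_of_nonneg_left (sq_eval_le_unit k v hv x c) (sub_nonneg.mpr hcx)
  have h3 := hscale d
  have h4 := hscale c
  have h5 : (∫ y in c..x, v.eval y ^ 2) + ∫ y in x..d, v.eval y ^ 2 = ∫ y in c..d, v.eval y ^ 2 :=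
    intervalIntegral.integral_add_adjacent_intervals
      (Continuous.intervalIntegrable (by fun_prop) _ _)
      (Continuous.intervalIntegrable (by fun_prop) _ _)
  rw [intervalIntegral.integral_symm] at h5
  rw [← h5, ← h3, ← h4]
  linear_combination h1 + h2



/-- hp inverse inequality on an interval (Lemma 4.1, second estimate):
there is a constant `C > 0`, independent of the degree `k` and of the interval,
such that for every `k ≥ 1`, every bounded open interval `I = (c, d)` with
`h_I = d - c`, and every real polynomial `v` of degree at most `k`,
`‖v‖_{L∞(I)} ≤ C k h_I^{-1/2} ‖v‖_{L²(I)}`. -/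
theorem hp_inverse_Linfty :
    ∃ C : ℝ, 0 < C ∧
      ∀ (k : ℕ), 1 ≤ k → ∀ (c d : ℝ), c < d →
        ∀ v : Polynomial ℝ, v.degree ≤ (k : ℕ) →
          eLpNorm (fun x => v.eval x) ⊤ (volume.restrict (Set.Ioo c d)) ≤
            ENNReal.ofReal (C * (k : ℝ) * (d - c) ^ (-(1 / 2 : ℝ)) *
              Real.sqrt (∫ x in Set.Ioo c d, (v.eval x) ^ 2)) := by
  refine ⟨2, by norm_num, fun k hk c d hcd v hv => ?_⟩
  rw [eLpNorm_exponent_top]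
  refine eLpNormEssSup_le_of_ae_enorm_bound ?_
  refine (ae_restrict_iff' measurableSet_Ioo).mpr (Filter.Eventually.of_forall fun x hx => ?_)
  rw [← ofReal_norm, Real.norm_eq_abs]
  refine ENNReal.ofReal_le_ofReal ?_
  have hlen : 0 < d - c := sub_pos.mpr hcd
  have hmain := length_mul_sq_eval_le k v hv hx.1.le hx.2.le
  rw [intervalIntegral.integral_of_le hcd.le, integral_Ioc_eq_integral_Ioo] at hmain
  set J : ℝ := ∫ y in Set.Ioo c d, v.eval y ^ 2 with hJ
  have hJ0 : 0 ≤ J := integral_nonneg fun y => sq_nonneg _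
  refine abs_le_of_sq_le_sq ?_ (by positivity)
  have hr : ((d - c) ^ (-(1 / 2 : ℝ))) ^ 2 = (d - c)⁻¹ := by
    rw [← Real.rpow_natCast, ← Real.rpow_mul hlen.le, ← Real.rpow_neg_one]
    norm_num
  rw [mul_pow, mul_pow, hr, Real.sq_sqrt hJ0]
  have hk1 : (1 : ℝ) ≤ k := by exact_mod_cast hk
  have hkk : ((k : ℝ) + 1) ^ 2 ≤ (2 * (k : ℝ)) ^ 2 := by
    gcongr
    linarith
  have h := hmain.trans (mul_le_mul_of_nonneg_right hkk hJ0)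
  rw [mul_right_comm, ← div_eq_mul_inv, le_div_iff₀ hlen]
  linarith
end

section
/- For every γ ≥ 1 there exists a constant C > 0, depending only on γ and in particular independent of the polynomial degree k and of the triangle, such that for every natural number k ≥ 1, every γ-shape-regular triangle T ⊆ ℝ² with diameter h_T, and every real bivariate polynomial v of total degree at most k, one has ‖∇v‖_{L²(T)} ≤ C k² h_T^{−1} ‖v‖_{L²(T)}. -/
open MeasureTheory MvPolynomial

/-!
The estimate is reduced to the `L²` Markov inequality `‖p'‖² ≤ 12 n⁴ ‖p‖²` on `[0, 1]` for
univariate polynomials of degree at most `n` (`Polynomial.HpInverse.markov_L2`).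

That inequality is proved without explicit Legendre polynomials. If `P` has degree at most `n` and
is orthogonal in `L²(0, 1)` to all polynomials of lower degree, integrating `(x P²)'` and
`((x - 1) P²)'` gives `P(0)² = P(1)² = (2n + 1) ‖P‖²`. Summing over an orthogonal decomposition,
`|q(0)|, |q(1)| ≤ n ‖q‖` for every `q` of degree less than `n`. Since `P ⊥ P''`, one has
`‖P'‖² = P'(1) P(1) - P'(0) P(0)`, and the endpoint bounds give `‖P'‖² ≤ 4 n² (2n + 1) ‖P‖²`.
The Cauchy–Schwarz inequality over the orthogonal decomposition then produces the factor `n⁴`.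

On a parallelogram, applying this on the line segments parallel to either edge (Fubini) bounds the
two edge derivatives of `v`. A triangle is the union of the three parallelograms spanned at its
vertices by the adjacent half-edges, all of which lie inside it. Finally `∇v` is recovered from the
edge derivatives by Cramer's rule. Its coefficients are bounded by a multiple of `1 / ρ` because
the barycentric coordinates take values in `[0, 1]` on the inscribed ball (`cross_bound`), and
`1 / ρ ≤ γ / h_T` by shape regularity.
-/


/-! ### The one-dimensional Markov inequality -/

namespace Polynomial.HpInverse

/-- The linear functional `p ↦ ∫₀¹ p(x) dx` on real polynomials. -/
noncomputable def unitIntegral : ℝ[X] →ₗ[ℝ] ℝ where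
  toFun p := ∫ x in (0 : ℝ)..1, p.eval x
  map_add' p q := by
    simp only [eval_add]
    exact intervalIntegral.integral_add (p.continuous.intervalIntegrable _ _)
      (q.continuous.intervalIntegrable _ _)
  map_smul' c p := by
    simp only [eval_smul, RingHom.id_apply]
    exact intervalIntegral.integral_smul _ _

local notation "I" => unitIntegral

lemma unitIntegral_derivative (p : ℝ[X]) : I (derivative p) = p.eval 1 - p.eval 0 :=
  intervalIntegral.integral_eq_sub_of_hasDerivAt (fun x _ => p.hasDerivAt x)
    ((derivative p).continuous.intervalIntegrable _ _)

lemma unitIntegral_mul_self_nonneg (p : ℝ[X]) : 0 ≤ I (p * p) := by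
  refine intervalIntegral.integral_nonneg zero_le_one fun x _ => ?_
  rw [eval_mul]; exact mul_self_nonneg _

lemma eq_zero_of_unitIntegral_mul_self (p : ℝ[X]) (h : I (p * p) = 0) : p = 0 := by
  by_contra hp
  have hinf : (Set.Icc (0 : ℝ) 1 \ {x | p.IsRoot x}).Nonempty :=
    ((Set.Icc_infinite zero_lt_one).sdiff (finite_setOfPred_isRoot hp)).nonempty
  obtain ⟨c, hc, hcr⟩ := hinf
  have : 0 < I (p * p) := by
    refine intervalIntegral.integral_pos zero_lt_one (p * p).continuous.continuousOn
      (fun x _ => by rw [eval_mul]; exact mul_self_nonneg _) ⟨c, hc, ?_⟩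
    rw [eval_mul]; exact mul_self_pos.2 hcr
  exact this.ne' h

lemma unitIntegral_cauchySchwarz (f g : ℝ[X]) : I (f * g) ^ 2 ≤ I (f * f) * I (g * g) := by
  have h : ∀ t : ℝ, 0 ≤ I (g * g) * (t * t) + 2 * I (f * g) * t + I (f * f) := fun t => by
    have := unitIntegral_mul_self_nonneg (f + t • g)
    have e : (f + t • g) * (f + t • g) = f * f + (2 * t) • (f * g) + (t * t) • (g * g) := by
      simp only [smul_eq_C_mul, map_mul, map_ofNat]; ring
    rw [e] at this
    simp only [map_add, map_smul, smul_eq_mul] at this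
    linarith
  have := discrim_le_zero h
  unfold discrim at this
  linarith

/-- The orthogonal decomposition with respect to `(p, q) ↦ ∫₀¹ p q`: a polynomial of degree at
most `n` is a multiple of the `n`-th (shifted) Legendre polynomial plus a polynomial of smaller
degree. -/
lemma exists_orthogonal_decomp (n : ℕ) (p : ℝ[X]) (hp : p ∈ degreeLT ℝ (n + 1)) :
    ∃ P q : ℝ[X], p = P + q ∧ P ∈ degreeLT ℝ (n + 1) ∧ q ∈ degreeLT ℝ n ∧
      ∀ r ∈ degreeLT ℝ n, I (P * r) = 0 := by
  have : FiniteDimensional ℝ (degreeLT ℝ n) :=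
    Module.Finite.equiv (degreeLTEquiv ℝ n).symm
  let B : LinearMap.BilinForm ℝ ℝ[X] := (LinearMap.mul ℝ ℝ[X]).compr₂ unitIntegral
  have hrefl : (B.restrict (degreeLT ℝ n)).IsRefl := fun f g h => by
    change I (g.1 * f.1) = 0
    rw [mul_comm]; exact h
  have hnd : (B.restrict (degreeLT ℝ n)).Nondegenerate := by
    refine hrefl.nondegenerate_iff_separatingLeft.2 ?_
    intro f hf
    exact Subtype.ext (eq_zero_of_unitIntegral_mul_self _ (hf f))
  let q : degreeLT ℝ n := (LinearMap.BilinForm.toDual _ hnd).symm ((B p).domRestrict _)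
  have hq : ∀ r : degreeLT ℝ n, I (q.1 * r.1) = I (p * r.1) := fun r => by
    have := LinearMap.BilinForm.apply_toDual_symm_apply (hB := hnd) ((B p).domRestrict _) r
    exact this
  refine ⟨p - q, q, by ring, ?_, q.2, fun r hr => ?_⟩
  · exact Submodule.sub_mem _ hp (degreeLT_mono n.le_succ q.2)
  · rw [sub_mul, map_sub, hq ⟨r, hr⟩, sub_self]

lemma derivative_mem_degreeLT {n : ℕ} {p : ℝ[X]} (hp : p ∈ degreeLT ℝ (n + 1)) :
    derivative p ∈ degreeLT ℝ n := by
  rw [mem_degreeLT, degree_lt_iff_coeff_zero] at *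
  intro m hm
  rw [coeff_derivative, hp (m + 1) (by omega), zero_mul]

/-- On polynomials of degree at most `n`, the Euler operator `p ↦ x p'` is `n p` up to lower
degree terms. -/
lemma X_mul_derivative_sub_mem {n : ℕ} {p : ℝ[X]} (hp : p ∈ degreeLT ℝ (n + 1)) :
    X * derivative p - C (n : ℝ) * p ∈ degreeLT ℝ n := by
  rw [mem_degreeLT, degree_lt_iff_coeff_zero] at *
  intro m hm
  rw [coeff_sub, coeff_C_mul]
  rcases hm.eq_or_lt with rfl | hm
  · cases n with
    | zero => simp
    | succ k => rw [coeff_X_mul, coeff_derivative]; push_cast; ring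
  · obtain ⟨k, rfl⟩ : ∃ k, m = k + 1 := ⟨m - 1, by omega⟩
    rw [coeff_X_mul, coeff_derivative, hp (k + 1) (by omega)]
    ring

/-- The endpoint values of a polynomial of degree `n` that is orthogonal to all lower degrees.
Integrate `(x P²)'` and `((x - 1) P²)'`, using that `x P' = n P` modulo lower degrees. -/
lemma eval_sq_of_orthogonal {n : ℕ} {P : ℝ[X]} (hP : P ∈ degreeLT ℝ (n + 1))
    (ho : ∀ r ∈ degreeLT ℝ n, I (P * r) = 0) :
    P.eval 1 ^ 2 = (2 * n + 1) * I (P * P) ∧ P.eval 0 ^ 2 = (2 * n + 1) * I (P * P) := by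
  have h1 := ho _ (X_mul_derivative_sub_mem hP)
  have h2 := ho _ (derivative_mem_degreeLT hP)
  have e0 : I (P * (X * derivative P)) = n * I (P * P) := by
    have : P * (X * derivative P - C (n : ℝ) * P) =
      P * (X * derivative P) - (n : ℝ) • (P * P) := by rw [smul_eq_C_mul]; ring
    rw [this, map_sub, map_smul, smul_eq_mul] at h1
    linarith
  have e1 : derivative (X * (P * P)) = P * P + (2 : ℝ) • (P * (X * derivative P)) := by
    simp only [derivative_mul, derivative_X, smul_eq_C_mul, map_ofNat]; ring
  have e2 : derivative ((X - 1) * (P * P)) =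
      P * P + (2 : ℝ) • (P * (X * derivative P)) - (2 : ℝ) • (P * derivative P) := by
    simp only [derivative_mul, derivative_sub, derivative_X, derivative_one, smul_eq_C_mul,
      map_ofNat]
    ring
  have i1 := unitIntegral_derivative (X * (P * P))
  have i2 := unitIntegral_derivative ((X - 1) * (P * P))
  rw [e1] at i1
  rw [e2] at i2
  simp only [map_add, map_sub, map_smul, smul_eq_mul, e0, h2, eval_mul, eval_sub, eval_X,
    eval_one] at i1 i2
  constructor <;> linarith

lemma unitIntegral_add_mul_self {P q : ℝ[X]} (h : I (P * q) = 0) :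
    I ((P + q) * (P + q)) = I (P * P) + I (q * q) := by
  have : (P + q) * (P + q) = P * P + (2 : ℝ) • (P * q) + q * q := by
    simp only [smul_eq_C_mul, map_ofNat]; ring
  rw [this, map_add, map_add, map_smul, h]; simp

/-- The two-term weighted Cauchy–Schwarz inequality, in the form used to add up orthogonal
components. -/
lemma two_mul_le_cross {a b A B c : ℝ} (ha : 0 ≤ a) (hb : 0 ≤ b) (hA : 0 ≤ A) (hB : 0 ≤ B)
    (h : c ^ 2 ≤ (a * A) * (b * B)) : 2 * c ≤ a * B + b * A := by
  have h0 : 0 ≤ a * B + b * A := by positivity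
  refine le_of_abs_le (abs_le_of_sq_le_sq ?_ h0)
  nlinarith [sq_nonneg (a * B - b * A)]

lemma eval_add_sq_le {x y a b A B : ℝ} (ha : 0 ≤ a) (hb : 0 ≤ b) (hA : 0 ≤ A) (hB : 0 ≤ B)
    (hx : x ^ 2 ≤ a * A) (hy : y ^ 2 ≤ b * B) : (x + y) ^ 2 ≤ (a + b) * (A + B) := by
  have := two_mul_le_cross ha hb hA hB (c := x * y)
    (by rw [mul_pow]; exact mul_le_mul hx hy (sq_nonneg _) (by positivity))
  nlinarith

/-- Endpoint evaluation on polynomials of degree less than `n` has norm at most `n`, because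
`1 + 3 + ⋯ + (2n - 1) = n²`. -/
lemma eval_sq_le (n : ℕ) : ∀ p ∈ degreeLT ℝ n,
    p.eval 1 ^ 2 ≤ (n : ℝ) ^ 2 * I (p * p) ∧ p.eval 0 ^ 2 ≤ (n : ℝ) ^ 2 * I (p * p) := by
  induction n with
  | zero =>
    intro p hp
    have : p = 0 := by
      rw [mem_degreeLT, degree_lt_iff_coeff_zero] at hp
      ext m; simpa using hp m (Nat.zero_le _)
    simp [this]
  | succ n ih =>
    intro p hp
    obtain ⟨P, q, rfl, hP, hq, ho⟩ := exists_orthogonal_decomp n p hp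
    obtain ⟨q1, q0⟩ := ih q hq
    obtain ⟨P1, P0⟩ := eval_sq_of_orthogonal hP ho
    rw [unitIntegral_add_mul_self (ho q hq), eval_add, eval_add]
    have e : ((n + 1 : ℕ) : ℝ) ^ 2 = (2 * n + 1) + (n : ℝ) ^ 2 := by push_cast; ring
    rw [e]
    exact ⟨eval_add_sq_le (by positivity) (by positivity) (unitIntegral_mul_self_nonneg _)
        (unitIntegral_mul_self_nonneg _) P1.le q1,
      eval_add_sq_le (by positivity) (by positivity) (unitIntegral_mul_self_nonneg _)
        (unitIntegral_mul_self_nonneg _) P0.le q0⟩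

/-- The inverse inequality for a single Legendre polynomial: since `P ⊥ P''`, integrating
`(P' P)'` expresses `‖P'‖²` by endpoint values of `P` and `P'`, which
`eval_sq_of_orthogonal` and `eval_sq_le` control by `‖P‖` and `‖P'‖`. -/
lemma markov_of_orthogonal {n : ℕ} {P : ℝ[X]} (hP : P ∈ degreeLT ℝ (n + 1))
    (ho : ∀ r ∈ degreeLT ℝ n, I (P * r) = 0) :
    I (derivative P * derivative P) ≤ 4 * (n : ℝ) ^ 2 * (2 * n + 1) * I (P * P) := by
  have hP' := derivative_mem_degreeLT hP
  have h2 : I (P * derivative (derivative P)) = 0 :=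
    ho _ (derivative_mem_degreeLT (degreeLT_mono n.le_succ hP'))
  obtain ⟨a1, a0⟩ := eval_sq_le n _ hP'
  obtain ⟨b1, b0⟩ := eval_sq_of_orthogonal hP ho
  have i := unitIntegral_derivative (derivative P * P)
  rw [derivative_mul, map_add, mul_comm _ P, h2, eval_mul, eval_mul, zero_add] at i
  have hN := unitIntegral_mul_self_nonneg (derivative P)
  have hM := unitIntegral_mul_self_nonneg P
  set N := I (derivative P * derivative P)
  set M := I (P * P)
  rcases hN.eq_or_lt with h | h
  · rw [← h]; positivity
  have x1 : (eval 1 (derivative P) * eval 1 P) ^ 2 ≤ (n : ℝ) ^ 2 * N * ((2 * n + 1) * M) := by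
    rw [mul_pow, b1]; gcongr
  have x0 : (eval 0 (derivative P) * eval 0 P) ^ 2 ≤ (n : ℝ) ^ 2 * N * ((2 * n + 1) * M) := by
    rw [mul_pow, b0]; gcongr
  set x := eval 1 (derivative P) * eval 1 P
  set y := eval 0 (derivative P) * eval 0 P
  have : N * N ≤ N * (4 * (n : ℝ) ^ 2 * (2 * n + 1) * M) := by
    have e : N * N = (x - y) ^ 2 := by rw [i]; ring
    nlinarith [sq_nonneg (x + y)]
  exact le_of_mul_le_mul_left this h

/-- The one-dimensional `L²` Markov inequality on the unit interval, with `‖p'‖² ≤ 12 n⁴ ‖p‖²`. -/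
lemma markov_L2 (n : ℕ) : ∀ p ∈ degreeLT ℝ (n + 1),
    I (derivative p * derivative p) ≤ 12 * (n : ℝ) ^ 4 * I (p * p) := by
  induction n with
  | zero =>
    intro p hp
    have h := derivative_mem_degreeLT hp
    have : derivative p = 0 := by
      rw [mem_degreeLT, degree_lt_iff_coeff_zero] at h
      ext m; simpa using h m (Nat.zero_le _)
    simp [this]
  | succ n ih =>
    intro p hp
    obtain ⟨P, q, rfl, hP, hq, ho⟩ := exists_orthogonal_decomp (n + 1) p hp
    have hPm := markov_of_orthogonal hP ho
    have hqm := ih q hq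
    have nP := unitIntegral_mul_self_nonneg P
    have nq := unitIntegral_mul_self_nonneg q
    have nP' := unitIntegral_mul_self_nonneg (derivative P)
    have nq' := unitIntegral_mul_self_nonneg (derivative q)
    have hc := two_mul_le_cross (a := 4 * ((n + 1 : ℕ) : ℝ) ^ 2 * (2 * ((n + 1 : ℕ) : ℝ) + 1))
      (b := 12 * (n : ℝ) ^ 4) (by positivity) (by positivity) nP nq
      ((unitIntegral_cauchySchwarz (derivative P) (derivative q)).trans
        (mul_le_mul hPm hqm nq' (by positivity)))
    rw [unitIntegral_add_mul_self (ho q hq), derivative_add]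
    have e : (derivative P + derivative q) * (derivative P + derivative q) =
        derivative P * derivative P + (2 : ℝ) • (derivative P * derivative q) +
          derivative q * derivative q := by
      simp only [smul_eq_C_mul, map_ofNat]; ring
    rw [e, map_add, map_add, map_smul, smul_eq_mul]
    have hcoef : 4 * ((n + 1 : ℕ) : ℝ) ^ 2 * (2 * ((n + 1 : ℕ) : ℝ) + 1) + 12 * (n : ℝ) ^ 4 ≤
        12 * ((n + 1 : ℕ) : ℝ) ^ 4 := by
      push_cast
      have : (0 : ℝ) ≤ n := n.cast_nonneg
      nlinarith [pow_nonneg this 2, pow_nonneg this 3]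
    calc _ ≤ (4 * ((n + 1 : ℕ) : ℝ) ^ 2 * (2 * ((n + 1 : ℕ) : ℝ) + 1) + 12 * (n : ℝ) ^ 4) *
          (I (P * P) + I (q * q)) := by nlinarith
      _ ≤ _ := mul_le_mul_of_nonneg_right hcoef (by positivity)

end Polynomial.HpInverse

/-! ### From line segments to parallelograms -/

namespace HpInverse

/-- The restriction of `v` to the line through `a` with direction `u`, as a polynomial in the
parameter `s` of `a + s u`. -/
noncomputable def lineRestrict (a u : Fin 2 → ℝ) : MvPolynomial (Fin 2) ℝ →ₐ[ℝ] Polynomial ℝ :=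
  aeval fun i => Polynomial.C (a i) + Polynomial.C (u i) * Polynomial.X

lemma eval_lineRestrict (a u : Fin 2 → ℝ) (v : MvPolynomial (Fin 2) ℝ) (s : ℝ) :
    (lineRestrict a u v).eval s = eval (fun i => a i + s * u i) v := by
  unfold lineRestrict
  induction v using MvPolynomial.induction_on with
  | C c => simp
  | add p q hp hq => simp only [map_add, Polynomial.eval_add, hp, hq]
  | mul_X p i hp =>
    simp only [map_mul, Polynomial.eval_mul, hp, aeval_X, eval_X, Polynomial.eval_add,
      Polynomial.eval_C, Polynomial.eval_X]
    ring

lemma derivative_lineRestrict (a u : Fin 2 → ℝ) (v : MvPolynomial (Fin 2) ℝ) :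
    Polynomial.derivative (lineRestrict a u v) =
      Polynomial.C (u 0) * lineRestrict a u (pderiv 0 v) +
        Polynomial.C (u 1) * lineRestrict a u (pderiv 1 v) := by
  unfold lineRestrict
  induction v using MvPolynomial.induction_on with
  | C c => simp
  | add p q hp hq => simp only [map_add, hp, hq]; ring
  | mul_X p i hp =>
    simp only [map_mul, Polynomial.derivative_mul, hp, Derivation.leibniz, smul_eq_mul, map_add,
      pderiv_X, aeval_X, Polynomial.derivative_C, Polynomial.derivative_X]
    fin_cases i <;> simp <;> ring

lemma lineRestrict_mem_degreeLT {k : ℕ} (a u : Fin 2 → ℝ) (v : MvPolynomial (Fin 2) ℝ)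
    (hv : v.totalDegree ≤ k) : lineRestrict a u v ∈ Polynomial.degreeLT ℝ (k + 1) := by
  rw [Polynomial.mem_degreeLT]
  refine Polynomial.degree_lt_iff_coeff_zero _ _ |>.2 fun m hm => ?_
  refine Polynomial.coeff_eq_zero_of_natDegree_lt ?_
  have := aeval_natDegree_le (m := k) (n := 1) v hv
    (fun i => Polynomial.C (a i) + Polynomial.C (u i) * Polynomial.X) fun i => by compute_degree
  unfold lineRestrict
  omega

/-- The directional derivative of `v` along `u` at `x`. -/
noncomputable def dirDeriv (u x : Fin 2 → ℝ) (v : MvPolynomial (Fin 2) ℝ) : ℝ :=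
  u 0 * eval x (pderiv 0 v) + u 1 * eval x (pderiv 1 v)

lemma markov_segment {k : ℕ} (a u : Fin 2 → ℝ) (v : MvPolynomial (Fin 2) ℝ)
    (hv : v.totalDegree ≤ k) :
    ∫ s in (0 : ℝ)..1, dirDeriv u (fun i => a i + s * u i) v ^ 2 ≤
      12 * (k : ℝ) ^ 4 * ∫ s in (0 : ℝ)..1, eval (fun i => a i + s * u i) v ^ 2 := by
  have h := Polynomial.HpInverse.markov_L2 k _ (lineRestrict_mem_degreeLT a u v hv)
  have e1 : ∀ s, (Polynomial.derivative (lineRestrict a u v) *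
      Polynomial.derivative (lineRestrict a u v)).eval s =
      dirDeriv u (fun i => a i + s * u i) v ^ 2 := fun s => by
    simp only [derivative_lineRestrict, Polynomial.eval_mul, Polynomial.eval_add,
      Polynomial.eval_C, eval_lineRestrict, dirDeriv]
    ring
  have e2 : ∀ s, (lineRestrict a u v * lineRestrict a u v).eval s =
      eval (fun i => a i + s * u i) v ^ 2 := fun s => by
    rw [Polynomial.eval_mul, eval_lineRestrict, sq]
  simpa only [Polynomial.HpInverse.unitIntegral, LinearMap.coe_mk, AddHom.coe_mk, e1, e2] using h

local notation "E" => EuclideanSpace ℝ (Fin 2)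

/-- The parametrization `(s, t) ↦ A + s u + t w` of a parallelogram, with the pair `(s, t)` stored
as a vector of the Euclidean plane so that the change of variables formula applies. -/
noncomputable def paraMap (A u w : E) (x : E) : E := A + (x 0 • u + x 1 • w)

/-- The unit square in the Euclidean plane. -/
def unitSquare : Set E := {x | x 0 ∈ Set.Icc (0 : ℝ) 1 ∧ x 1 ∈ Set.Icc (0 : ℝ) 1}

/-- The parallelogram with vertex `A` and edge vectors `u` and `w`. -/
def parallelogram (A u w : E) : Set E := paraMap A u w '' unitSquare

/-- The oriented area of the parallelogram with edge vectors `u` and `w`. -/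
noncomputable def cross (u w : E) : ℝ := u 0 * w 1 - u 1 * w 0

/-- The coordinate identification of the Euclidean plane with `ℝ × ℝ`. -/
noncomputable def toProd : E ≃ᵐ ℝ × ℝ :=
  (MeasurableEquiv.toLp 2 (Fin 2 → ℝ)).symm.trans MeasurableEquiv.finTwoArrow

lemma measurePreserving_toProd : MeasurePreserving toProd volume volume :=
  (EuclideanSpace.volume_preserving_symm_measurableEquiv_toLp (Fin 2)).trans
    (volume_preserving_finTwoArrow ℝ)

lemma toProd_apply (x : E) : toProd x = (x 0, x 1) := rfl

lemma unitSquare_eq : unitSquare = toProd ⁻¹' (Set.Icc 0 1 ×ˢ Set.Icc 0 1) := rfl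

lemma setIntegral_unitSquare (g : ℝ × ℝ → ℝ) (hg : Continuous g) :
    ∫ x in unitSquare, g (x 0, x 1) = ∫ s in (0 : ℝ)..1, ∫ t in (0 : ℝ)..1, g (s, t) := by
  have h := measurePreserving_toProd.setIntegral_preimage_emb toProd.measurableEmbedding g
    (Set.Icc 0 1 ×ˢ Set.Icc 0 1)
  rw [← unitSquare_eq] at h
  simp only [toProd_apply] at h
  rw [h, Measure.volume_eq_prod, setIntegral_prod]
  · simp only [intervalIntegral.integral_of_le zero_le_one, integral_Icc_eq_integral_Ioc]
  · exact hg.continuousOn.integrableOn_compact (isCompact_Icc.prod isCompact_Icc)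

lemma setIntegral_unitSquare_swap (g : ℝ × ℝ → ℝ) (hg : Continuous g) :
    ∫ x in unitSquare, g (x 0, x 1) = ∫ t in (0 : ℝ)..1, ∫ s in (0 : ℝ)..1, g (s, t) := by
  rw [setIntegral_unitSquare g hg]
  simp only [intervalIntegral.integral_of_le zero_le_one]
  refine integral_integral_swap ?_
  rw [Measure.prod_restrict]
  exact (hg.continuousOn.integrableOn_compact (isCompact_Icc.prod isCompact_Icc)).mono_set
    (Set.prod_mono Set.Ioc_subset_Icc_self Set.Ioc_subset_Icc_self)

lemma continuous_paraMap (A u w : E) : Continuous (paraMap A u w) := by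
  unfold paraMap; fun_prop

lemma isCompact_unitSquare : IsCompact unitSquare := by
  have : unitSquare = (EuclideanSpace.equiv (Fin 2) ℝ).toHomeomorph ⁻¹'
      (Set.Icc (0 : Fin 2 → ℝ) 1) := by
    ext x
    simp [unitSquare, Pi.le_def, Fin.forall_fin_two]
    tauto
  rw [this]
  exact (Homeomorph.isCompact_preimage _).2 isCompact_Icc

lemma isCompact_parallelogram (A u w : E) : IsCompact (parallelogram A u w) :=
  isCompact_unitSquare.image (continuous_paraMap A u w)

/-- Change of variables to the unit square. The Jacobian determinant is a constant whose value
plays no role, since it occurs on both sides of the inverse inequality. -/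
lemma exists_setIntegral_parallelogram (A u w : E) (h : cross u w ≠ 0) :
    ∃ c : ℝ, 0 ≤ c ∧ ∀ g : E → ℝ,
      ∫ x in parallelogram A u w, g x = c * ∫ x in unitSquare, g (paraMap A u w x) := by
  let L : E →L[ℝ] E := (EuclideanSpace.proj (0 : Fin 2)).smulRight u +
    (EuclideanSpace.proj (1 : Fin 2)).smulRight w
  refine ⟨|L.det|, abs_nonneg _, fun g => ?_⟩
  have hd : ∀ x ∈ unitSquare, HasFDerivWithinAt (paraMap A u w) L unitSquare x := fun x _ =>
    (L.hasFDerivAt.const_add A).hasFDerivWithinAt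
  have hinj : Set.InjOn (paraMap A u w) unitSquare := by
    intro x _ y _ hxy
    have e0 := congrArg (fun z : E => z 0) hxy
    have e1 := congrArg (fun z : E => z 1) hxy
    simp [paraMap] at e0 e1
    have k0 : (x 0 - y 0) * cross u w = 0 := by unfold cross; linear_combination w 1 * e0 - w 0 * e1
    have k1 : (x 1 - y 1) * cross u w = 0 := by unfold cross; linear_combination u 0 * e1 - u 1 * e0
    have k0 := (mul_eq_zero.1 k0).resolve_right h
    have k1 := (mul_eq_zero.1 k1).resolve_right h
    ext i; fin_cases i
    · exact sub_eq_zero.1 k0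
    · exact sub_eq_zero.1 k1
  rw [parallelogram, integral_image_eq_integral_abs_det_fderiv_smul volume
    isCompact_unitSquare.measurableSet hd hinj]
  simp only [smul_eq_mul]
  rw [integral_const_mul]

lemma continuous_eval_comp {α : Type*} [TopologicalSpace α] (v : MvPolynomial (Fin 2) ℝ)
    {f : α → Fin 2 → ℝ} (hf : Continuous f) : Continuous fun x => eval (f x) v :=
  v.continuous_eval.comp hf

lemma continuous_dirDeriv_comp {α : Type*} [TopologicalSpace α] (u : Fin 2 → ℝ)
    (v : MvPolynomial (Fin 2) ℝ) {f : α → Fin 2 → ℝ} (hf : Continuous f) :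
    Continuous fun x => dirDeriv u (f x) v := by
  unfold dirDeriv
  exact (continuous_const.mul (continuous_eval_comp _ hf)).add
    (continuous_const.mul (continuous_eval_comp _ hf))

lemma continuous_eval_sq {α : Type*} [TopologicalSpace α] (v : MvPolynomial (Fin 2) ℝ)
    {f : α → Fin 2 → ℝ} (hf : Continuous f) : Continuous fun x => eval (f x) v ^ 2 :=
  (continuous_eval_comp v hf).pow 2

lemma continuous_dirDeriv_sq {α : Type*} [TopologicalSpace α] (u : Fin 2 → ℝ)
    (v : MvPolynomial (Fin 2) ℝ) {f : α → Fin 2 → ℝ} (hf : Continuous f) :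
    Continuous fun x => dirDeriv u (f x) v ^ 2 :=
  (continuous_dirDeriv_comp u v hf).pow 2

lemma integral_integral_le {g h : ℝ → ℝ → ℝ} (hg : Continuous (Function.uncurry g))
    (hh : Continuous (Function.uncurry h)) {c : ℝ}
    (H : ∀ s, ∫ t in (0 : ℝ)..1, g s t ≤ c * ∫ t in (0 : ℝ)..1, h s t) :
    ∫ s in (0 : ℝ)..1, ∫ t in (0 : ℝ)..1, g s t ≤
      c * ∫ s in (0 : ℝ)..1, ∫ t in (0 : ℝ)..1, h s t := by
  rw [← intervalIntegral.integral_const_mul]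
  refine intervalIntegral.integral_mono_on zero_le_one ?_ ?_ fun s _ => H s
  · exact (intervalIntegral.continuous_parametric_intervalIntegral_of_continuous' hg
      0 1).intervalIntegrable _ _
  · exact (continuous_const.mul
      (intervalIntegral.continuous_parametric_intervalIntegral_of_continuous' hh
        0 1)).intervalIntegrable _ _

/-- The inverse inequality on a parametrized square, for the derivatives along the two edges:
on each fibre it is the one-dimensional inequality. -/
lemma setIntegral_dirDeriv_le {k : ℕ} (A u w : E) (v : MvPolynomial (Fin 2) ℝ)
    (hv : v.totalDegree ≤ k) :
    (∫ x in unitSquare, dirDeriv u (paraMap A u w x) v ^ 2 ≤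
      12 * (k : ℝ) ^ 4 * ∫ x in unitSquare, eval (paraMap A u w x) v ^ 2) ∧
    (∫ x in unitSquare, dirDeriv w (paraMap A u w x) v ^ 2 ≤
      12 * (k : ℝ) ^ 4 * ∫ x in unitSquare, eval (paraMap A u w x) v ^ 2) := by
  let F : ℝ × ℝ → Fin 2 → ℝ := fun p i => A i + (p.1 * u i + p.2 * w i)
  have hF : Continuous F := by fun_prop
  have hF' : Continuous fun p : ℝ × ℝ => F (p.2, p.1) := by fun_prop
  have e : ∀ x : E, (paraMap A u w x : Fin 2 → ℝ) = F (x 0, x 1) := fun x => by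
    ext i; simp [paraMap, F]
  simp only [e]
  constructor
  · rw [setIntegral_unitSquare_swap (fun p => dirDeriv u (F p) v ^ 2)
        (continuous_dirDeriv_sq u v hF),
      setIntegral_unitSquare_swap (fun p => eval (F p) v ^ 2) (continuous_eval_sq v hF)]
    refine integral_integral_le (g := fun t s => dirDeriv u (F (s, t)) v ^ 2)
      (h := fun t s => eval (F (s, t)) v ^ 2)
      (continuous_dirDeriv_sq u v hF') (continuous_eval_sq v hF') fun t => ?_
    have := markov_segment (fun i => A i + t * w i) u v hv
    have e2 : ∀ s, (fun i => A i + t * w i + s * u i) = F (s, t) := fun s => by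
      ext i; simp only [F]; ring
    simpa only [e2] using this
  · rw [setIntegral_unitSquare (fun p => dirDeriv w (F p) v ^ 2)
        (continuous_dirDeriv_sq w v hF),
      setIntegral_unitSquare (fun p => eval (F p) v ^ 2) (continuous_eval_sq v hF)]
    refine integral_integral_le (g := fun s t => dirDeriv w (F (s, t)) v ^ 2)
      (h := fun s t => eval (F (s, t)) v ^ 2)
      (continuous_dirDeriv_sq w v hF) (continuous_eval_sq v hF) fun s => ?_
    have := markov_segment (fun i => A i + s * u i) w v hv
    have e2 : ∀ t, (fun i => A i + s * u i + t * w i) = F (s, t) := fun t => by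
      ext i; simp only [F]; ring
    simpa only [e2] using this

/-- The squared Euclidean length of `∇v` at `x`. -/
noncomputable def gradSq (v : MvPolynomial (Fin 2) ℝ) (x : Fin 2 → ℝ) : ℝ :=
  eval x (pderiv 0 v) ^ 2 + eval x (pderiv 1 v) ^ 2

/-- Cramer's rule recovers `∇v` from its two edge derivatives. -/
lemma gradSq_le {u w : E} {r : ℝ} (h : cross u w ≠ 0) (hu : ∀ i, r * |u i| ≤ |cross u w|)
    (hw : ∀ i, r * |w i| ≤ |cross u w|) (hr : 0 < r) (v : MvPolynomial (Fin 2) ℝ)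
    (x : Fin 2 → ℝ) :
    gradSq v x ≤ 4 / r ^ 2 * (dirDeriv u x v ^ 2 + dirDeriv w x v ^ 2) := by
  have sqb : ∀ y : ℝ, r * |y| ≤ |cross u w| → (r * y) ^ 2 ≤ cross u w ^ 2 := fun y hy => by
    apply sq_le_sq.2; rwa [abs_mul, abs_of_pos hr]
  have key : ∀ p q a b g d : ℝ, (r * p) ^ 2 ≤ d ^ 2 → (r * q) ^ 2 ≤ d ^ 2 → d ≠ 0 →
      d * g = p * a - q * b → r ^ 2 * g ^ 2 ≤ 2 * (a ^ 2 + b ^ 2) := by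
    intro p q a b g d hp hq hd e
    refine le_of_mul_le_mul_left ?_ (by positivity : 0 < d ^ 2)
    calc d ^ 2 * (r ^ 2 * g ^ 2) = (r * p * a - r * q * b) ^ 2 := by
          rw [show r * p * a - r * q * b = r * (d * g) by rw [e]; ring]; ring
      _ ≤ 2 * ((r * p) ^ 2 * a ^ 2 + (r * q) ^ 2 * b ^ 2) := by
          nlinarith [sq_nonneg (r * p * a + r * q * b)]
      _ ≤ 2 * (d ^ 2 * a ^ 2 + d ^ 2 * b ^ 2) := by gcongr
      _ = _ := by ring
  have k0 := key (w 1) (u 1) (dirDeriv u x v) (dirDeriv w x v) (eval x (pderiv 0 v)) _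
    (sqb _ (hw 1)) (sqb _ (hu 1)) h (by unfold cross dirDeriv; ring)
  have k1 := key (u 0) (w 0) (dirDeriv w x v) (dirDeriv u x v) (eval x (pderiv 1 v)) _
    (sqb _ (hu 0)) (sqb _ (hw 0)) h (by unfold cross dirDeriv; ring)
  rw [div_mul_eq_mul_div, le_div_iff₀ (by positivity)]
  unfold gradSq
  linarith

lemma continuous_gradSq_comp {α : Type*} [TopologicalSpace α] (v : MvPolynomial (Fin 2) ℝ)
    {f : α → Fin 2 → ℝ} (hf : Continuous f) : Continuous fun x => gradSq v (f x) :=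
  ((continuous_eval_comp _ hf).pow 2).add ((continuous_eval_comp _ hf).pow 2)

lemma continuous_coe : Continuous fun x : E => (x : Fin 2 → ℝ) := by fun_prop

lemma parallelogram_inverse {k : ℕ} {A u w : E} {r : ℝ} (h : cross u w ≠ 0)
    (hu : ∀ i, r * |u i| ≤ |cross u w|) (hw : ∀ i, r * |w i| ≤ |cross u w|) (hr : 0 < r)
    (v : MvPolynomial (Fin 2) ℝ) (hv : v.totalDegree ≤ k) :
    ∫ x in parallelogram A u w, gradSq v x ≤
      96 * (k : ℝ) ^ 4 / r ^ 2 * ∫ x in parallelogram A u w, eval x v ^ 2 := by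
  obtain ⟨c, hc, hi⟩ := exists_setIntegral_parallelogram A u w h
  rw [hi, hi]
  obtain ⟨h1, h2⟩ := setIntegral_dirDeriv_le A u w v hv
  have hcont : Continuous fun x : E => (paraMap A u w x : Fin 2 → ℝ) :=
    continuous_coe.comp (continuous_paraMap A u w)
  have int : ∀ {f : E → ℝ}, Continuous f → IntegrableOn f unitSquare := fun hf =>
    hf.continuousOn.integrableOn_compact isCompact_unitSquare
  have iu := int (continuous_dirDeriv_sq u v hcont)
  have iw := int (continuous_dirDeriv_sq w v hcont)
  have h3 : ∫ x in unitSquare, gradSq v (paraMap A u w x) ≤ 4 / r ^ 2 *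
      ((∫ x in unitSquare, dirDeriv u (paraMap A u w x) v ^ 2) +
        ∫ x in unitSquare, dirDeriv w (paraMap A u w x) v ^ 2) := by
    rw [← integral_add iu iw, ← integral_const_mul]
    exact integral_mono (int (continuous_gradSq_comp v hcont)) ((iu.add iw).const_mul _)
      fun x => gradSq_le h hu hw hr v _
  calc _ ≤ c * (4 / r ^ 2 * (12 * (k : ℝ) ^ 4 * (∫ x in unitSquare, eval (paraMap A u w x) v ^ 2) +
        12 * (k : ℝ) ^ 4 * ∫ x in unitSquare, eval (paraMap A u w x) v ^ 2)) := by
        gcongr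
        exact h3.trans (by gcongr)
    _ = _ := by ring

/-! ### Covering the triangle by three parallelograms -/

lemma mem_triangle {A B D x : E} : x ∈ convexHull ℝ {A, B, D} ↔
    ∃ a b c : ℝ, 0 ≤ a ∧ 0 ≤ b ∧ 0 ≤ c ∧ a + b + c = 1 ∧ a • A + b • B + c • D = x := by
  constructor
  · rw [convexHull_insert (Set.insert_nonempty _ _), convexHull_pair, convexJoin_singleton_left]
    simp only [Set.mem_iUnion]
    rintro ⟨y, ⟨b, d, hb, hd, hbd, rfl⟩, ⟨a, c, ha, hc, hac, rfl⟩⟩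
    refine ⟨a, c * b, c * d, ha, by positivity, by positivity, ?_, ?_⟩
    · rw [add_assoc, ← mul_add, hbd, mul_one, hac]
    · module
  · rintro ⟨a, b, c, ha, hb, hc, h, rfl⟩
    have hA : A ∈ convexHull ℝ {A, B, D} := subset_convexHull _ _ (by simp)
    have hB : B ∈ convexHull ℝ {A, B, D} := subset_convexHull _ _ (by simp)
    have hD : D ∈ convexHull ℝ {A, B, D} := subset_convexHull _ _ (by simp)
    have := (convex_convexHull ℝ {A, B, D}).sum_mem (t := Finset.univ) (w := ![a, b, c])
      (z := ![A, B, D]) (by simp [Fin.forall_fin_succ, ha, hb, hc])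
      (by simpa [Fin.sum_univ_three] using h) (by simp [Fin.forall_fin_succ, hA, hB, hD])
    simpa [Fin.sum_univ_three] using this

/-- The parallelogram spanned at the vertex `A` by the two adjacent half-edges. -/
def cornerPara (A B D : E) : Set E :=
  parallelogram A ((1 / 2 : ℝ) • (B - A)) ((1 / 2 : ℝ) • (D - A))

lemma cornerPara_subset (A B D : E) : cornerPara A B D ⊆ convexHull ℝ {A, B, D} := by
  rintro _ ⟨x, ⟨⟨h0, h0'⟩, ⟨h1, h1'⟩⟩, rfl⟩
  refine mem_triangle.2 ⟨1 - (x 0 + x 1) / 2, x 0 / 2, x 1 / 2, by linarith, by linarith,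
    by linarith, by ring, ?_⟩
  unfold paraMap
  module

lemma mem_cornerPara {A B D : E} {a b c : ℝ} (hb : 0 ≤ b) (hc : 0 ≤ c) (h : a + b + c = 1)
    (hb' : b ≤ 1 / 2) (hc' : c ≤ 1 / 2) : a • A + b • B + c • D ∈ cornerPara A B D := by
  refine ⟨!₂[2 * b, 2 * c], ⟨⟨?_, ?_⟩, ⟨?_, ?_⟩⟩, ?_⟩
  any_goals simp
  any_goals linarith
  obtain rfl : a = 1 - b - c := by linarith
  simp only [paraMap, Matrix.cons_val_zero, Matrix.cons_val_one]
  module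

/-- At most one barycentric coordinate exceeds `1 / 2`, so the three corner parallelograms
cover the triangle. -/
lemma triangle_subset (A B D : E) : convexHull ℝ {A, B, D} ⊆
    cornerPara A B D ∪ cornerPara B A D ∪ cornerPara D A B := by
  intro x hx
  obtain ⟨a, b, c, ha, hb, hc, h, rfl⟩ := mem_triangle.1 hx
  by_cases h1 : 1 / 2 < b
  · left; right
    rw [show a • A + b • B + c • D = b • B + a • A + c • D by abel]
    exact mem_cornerPara ha hc (by linarith) (by linarith) (by linarith)
  by_cases h2 : 1 / 2 < c
  · right
    rw [show a • A + b • B + c • D = c • D + a • A + b • B by abel]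
    exact mem_cornerPara ha hb (by linarith) (by linarith) (by linarith)
  · left; left
    exact mem_cornerPara hb hc h (by linarith) (by linarith)

/-- A triangle containing a ball of radius `ρ` has area bounded below by `ρ` times the size of
its edges: the barycentric coordinates vary by at most one over a diameter of the ball. -/
lemma cross_bound {A B D x₀ : E} {ρ : ℝ} (hρ : 0 < ρ)
    (hball : Metric.ball x₀ ρ ⊆ convexHull ℝ {A, B, D}) (i : Fin 2) :
    ρ * |(B - A) i| ≤ |cross (B - A) (D - A)| ∧ ρ * |(D - A) i| ≤ |cross (B - A) (D - A)| := by
  have hdist : ∀ j : Fin 2, ∀ s : ℝ, |s| = ρ / 2 → ∃ b c : ℝ, 0 ≤ b ∧ b ≤ 1 ∧ 0 ≤ c ∧ c ≤ 1 ∧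
      x₀ + EuclideanSpace.single j s = A + b • (B - A) + c • (D - A) := by
    intro j s hs
    have : x₀ + EuclideanSpace.single j s ∈ Metric.ball x₀ ρ := by
      rw [Metric.mem_ball, dist_eq_norm, add_sub_cancel_left, PiLp.norm_single,
        Real.norm_eq_abs, hs]
      linarith
    obtain ⟨a, b, c, ha, hb, hc, h, e⟩ := mem_triangle.1 (hball this)
    refine ⟨b, c, hb, by linarith, hc, by linarith, ?_⟩
    obtain rfl : a = 1 - b - c := by linarith
    rw [← e]; module
  -- Subtract the barycentric representations of the antipodal points `x₀ ± (ρ / 2) e_j`.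
  have diff : ∀ j : Fin 2, ∃ b c : ℝ, |b| ≤ 1 ∧ |c| ≤ 1 ∧
      EuclideanSpace.single j ρ = b • (B - A) + c • (D - A) := by
    intro j
    obtain ⟨b, c, hb, hb', hc, hc', e⟩ := hdist j (ρ / 2) (abs_of_pos (by positivity))
    obtain ⟨b', c', kb, kb', kc, kc', e'⟩ := hdist j (-(ρ / 2))
      (by rw [abs_neg, abs_of_pos (by positivity)])
    refine ⟨b - b', c - c', abs_le.2 ⟨by linarith, by linarith⟩,
      abs_le.2 ⟨by linarith, by linarith⟩, ?_⟩
    have e1 : EuclideanSpace.single j ρ = (x₀ + EuclideanSpace.single j (ρ / 2)) -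
        (x₀ + EuclideanSpace.single j (-(ρ / 2))) := by
      ext l
      by_cases hl : l = j <;> simp [hl]
    rw [e1, e, e']; module
  generalize B - A = u at *
  generalize D - A = w at *
  have scale : ∀ y z : ℝ, |z| ≤ 1 → ∀ d : ℝ, ρ * y = z * d → ρ * |y| ≤ |d| := by
    intro y z hz d h
    rw [show ρ * |y| = |ρ * y| by rw [abs_mul, abs_of_pos hρ], h, abs_mul]
    exact mul_le_of_le_one_left (abs_nonneg _) hz
  obtain ⟨b, c, hb, hc, e⟩ := diff 0
  obtain ⟨b', c', hb', hc', e'⟩ := diff 1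
  have e0 := congrArg (fun z : E => z 0) e
  have e1 := congrArg (fun z : E => z 1) e
  have e0' := congrArg (fun z : E => z 0) e'
  have e1' := congrArg (fun z : E => z 1) e'
  simp at e0 e1 e0' e1'
  fin_cases i
  · exact ⟨scale _ c' hc' _ (by simp [cross]; linear_combination u 0 * e1' - u 1 * e0'),
      scale _ (-b') (by rwa [abs_neg]) _
        (by simp [cross]; linear_combination w 0 * e1' - w 1 * e0')⟩
  · exact ⟨scale _ (-c) (by rwa [abs_neg]) _
        (by simp [cross]; linear_combination u 1 * e0 - u 0 * e1),
      scale _ b hb _ (by simp [cross]; linear_combination w 1 * e0 - w 0 * e1)⟩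

lemma cornerPara_inverse {k : ℕ} {A B D x₀ : E} {ρ : ℝ} (hAB : A ≠ B) (hρ : 0 < ρ)
    (hball : Metric.ball x₀ ρ ⊆ convexHull ℝ {A, B, D})
    (v : MvPolynomial (Fin 2) ℝ) (hv : v.totalDegree ≤ k) :
    ∫ x in cornerPara A B D, gradSq v x ≤
      384 * (k : ℝ) ^ 4 / ρ ^ 2 * ∫ x in convexHull ℝ {A, B, D}, eval x v ^ 2 := by
  have hb := cross_bound hρ hball
  have hne : cross (B - A) (D - A) ≠ 0 := by
    intro h0
    apply hAB
    ext i
    have := (hb i).1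
    rw [h0, abs_zero] at this
    have h1 : |(B - A) i| = 0 :=
      le_antisymm (nonpos_of_mul_nonpos_right this hρ) (abs_nonneg _)
    have h2 : B i - A i = 0 := abs_eq_zero.1 h1
    linarith
  have hcr : cross ((1 / 2 : ℝ) • (B - A)) ((1 / 2 : ℝ) • (D - A)) =
      1 / 4 * cross (B - A) (D - A) := by
    simp only [cross, PiLp.smul_apply, smul_eq_mul]; ring
  have half : ∀ y d : ℝ, ρ * |y| ≤ |d| → ρ / 2 * |1 / 2 * y| ≤ |1 / 4 * d| := fun y d h => by
    rw [abs_mul, abs_mul, abs_of_pos (by norm_num : (0 : ℝ) < 1 / 2),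
      abs_of_pos (by norm_num : (0 : ℝ) < 1 / 4)]
    linarith
  have h := parallelogram_inverse (A := A) (u := (1 / 2 : ℝ) • (B - A))
    (w := (1 / 2 : ℝ) • (D - A)) (r := ρ / 2) (by rw [hcr]; positivity)
    (fun i => by rw [hcr]; exact half _ _ (hb i).1)
    (fun i => by rw [hcr]; exact half _ _ (hb i).2) (by positivity) v hv
  have hcomp : IsCompact (convexHull ℝ {A, B, D} : Set E) :=
    Set.Finite.isCompact_convexHull ℝ (Set.toFinite _)
  have hmono : ∫ x in cornerPara A B D, eval x v ^ 2 ≤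
      ∫ x in convexHull ℝ {A, B, D}, eval x v ^ 2 :=
    setIntegral_mono_set
      ((continuous_eval_sq v continuous_coe).continuousOn.integrableOn_compact hcomp)
      (Filter.Eventually.of_forall fun x => sq_nonneg _)
      (cornerPara_subset A B D).eventuallyLE
  calc _ ≤ 96 * (k : ℝ) ^ 4 / (ρ / 2) ^ 2 * ∫ x in cornerPara A B D, eval x v ^ 2 := h
    _ = 384 * (k : ℝ) ^ 4 / ρ ^ 2 * ∫ x in cornerPara A B D, eval x v ^ 2 := by
      field_simp; ring
    _ ≤ _ := by gcongr

lemma setIntegral_union_le {s t : Set E} {f : E → ℝ} (hf : ∀ x, 0 ≤ f x)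
    (hs : IntegrableOn f s) (ht : IntegrableOn f t) :
    ∫ x in s ∪ t, f x ≤ (∫ x in s, f x) + ∫ x in t, f x := by
  rw [← integral_add_measure hs ht]
  exact integral_mono_measure (Measure.restrict_union_le s t) (Filter.Eventually.of_forall hf)
    (Integrable.add_measure hs ht)

lemma triangle_inverse_sq {k : ℕ} {A B D x₀ : E} {ρ : ℝ} (hAB : A ≠ B) (hAD : A ≠ D)
    (hρ : 0 < ρ) (hball : Metric.ball x₀ ρ ⊆ convexHull ℝ {A, B, D})
    (v : MvPolynomial (Fin 2) ℝ) (hv : v.totalDegree ≤ k) :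
    ∫ x in convexHull ℝ {A, B, D}, gradSq v x ≤
      1152 * (k : ℝ) ^ 4 / ρ ^ 2 * ∫ x in convexHull ℝ {A, B, D}, eval x v ^ 2 := by
  have eB : ({B, A, D} : Set E) = {A, B, D} := Set.insert_comm _ _ _
  have eD : ({D, A, B} : Set E) = {A, B, D} := by
    rw [Set.insert_comm, Set.pair_comm]
  have h1 := cornerPara_inverse hAB hρ hball v hv
  have h2 := cornerPara_inverse (A := B) (B := A) (D := D) hAB.symm hρ (by rwa [eB]) v hv
  have h3 := cornerPara_inverse (A := D) (B := A) (D := B) hAD.symm hρ (by rwa [eD]) v hv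
  rw [eB] at h2
  rw [eD] at h3
  have hnn : ∀ x : E, 0 ≤ gradSq v x := fun x => add_nonneg (sq_nonneg _) (sq_nonneg _)
  have int : ∀ A B D : E, IntegrableOn (fun x : E => gradSq v x) (cornerPara A B D) :=
    fun A B D => (continuous_gradSq_comp v continuous_coe).continuousOn.integrableOn_compact
      (isCompact_parallelogram _ _ _)
  have i12 := (int A B D).union (int B A D)
  have h4 := setIntegral_mono_set (i12.union (int D A B)) (Filter.Eventually.of_forall hnn)
    (triangle_subset A B D).eventuallyLE
  have h5 := setIntegral_union_le hnn i12 (int D A B)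
  have h6 := setIntegral_union_le hnn (int A B D) (int B A D)
  calc _ ≤ _ := h4.trans (h5.trans (add_le_add_left h6 _))
    _ ≤ _ := add_le_add (add_le_add h1 h2) h3
    _ = _ := by ring

end HpInverse

/-- hp inverse inequality on shape-regular triangles (Lemma 4.1, third estimate):
for every `γ ≥ 1` there is `C > 0`, depending only on `γ`, such that for every
`k ≥ 1`, every `γ`-shape-regular triangle `T ⊆ ℝ²` (the convex hull of three
affinely independent points, containing a ball of radius `ρ > 0` with
`diam T ≤ γ ρ`), and every real bivariate polynomial `v` of total degree at most
`k`, one has `‖∇v‖_{L²(T)} ≤ C k² (diam T)⁻¹ ‖v‖_{L²(T)}`. -/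
theorem hp_inverse_grad_L2_triangle (γ : ℝ) (hγ : 1 ≤ γ) :
    ∃ C : ℝ, 0 < C ∧
      ∀ (k : ℕ), 1 ≤ k →
        ∀ A B D : EuclideanSpace ℝ (Fin 2),
          AffineIndependent ℝ ![A, B, D] →
          ∀ (x₀ : EuclideanSpace ℝ (Fin 2)) (ρ : ℝ), 0 < ρ →
            Metric.ball x₀ ρ ⊆ convexHull ℝ {A, B, D} →
            Metric.diam (convexHull ℝ {A, B, D} : Set (EuclideanSpace ℝ (Fin 2))) ≤ γ * ρ →
            ∀ v : MvPolynomial (Fin 2) ℝ, v.totalDegree ≤ k →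
              Real.sqrt (∫ x in (convexHull ℝ {A, B, D} : Set (EuclideanSpace ℝ (Fin 2))),
                  ((eval (fun i => x i) (pderiv (0 : Fin 2) v)) ^ 2 +
                   (eval (fun i => x i) (pderiv (1 : Fin 2) v)) ^ 2)) ≤
                C * (k : ℝ) ^ 2 *
                  (Metric.diam (convexHull ℝ {A, B, D} : Set (EuclideanSpace ℝ (Fin 2))))⁻¹ *
                  Real.sqrt (∫ x in (convexHull ℝ {A, B, D} : Set (EuclideanSpace ℝ (Fin 2))),
                    (eval (fun i => x i) v) ^ 2) := by
  -- `34² = 1156 ≥ 1152`, the constant in the squared inequality.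
  refine ⟨34 * γ, by positivity, ?_⟩
  intro k hk A B D hind x₀ ρ hρ hball hdiam v hv
  have hAB : A ≠ B := fun h => by simpa using hind.injective.ne (show (0 : Fin 3) ≠ 1 by decide) h
  have hAD : A ≠ D := fun h => by simpa using hind.injective.ne (show (0 : Fin 3) ≠ 2 by decide) h
  have key := HpInverse.triangle_inverse_sq hAB hAD hρ hball v hv
  have hcomp : IsCompact (convexHull ℝ {A, B, D} : Set (EuclideanSpace ℝ (Fin 2))) :=
    Set.Finite.isCompact_convexHull ℝ (Set.toFinite _)
  have hh : 0 < Metric.diam (convexHull ℝ {A, B, D} : Set (EuclideanSpace ℝ (Fin 2))) := by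
    refine (dist_pos.2 hAB).trans_le (Metric.dist_le_diam_of_mem hcomp.isBounded ?_ ?_) <;>
    exact subset_convexHull _ _ (by simp)
  set h := Metric.diam (convexHull ℝ {A, B, D} : Set (EuclideanSpace ℝ (Fin 2)))
  set S := convexHull ℝ {A, B, D}
  have hγ0 : 0 < γ := by linarith
  have hN : 0 ≤ ∫ x in S, eval x v ^ 2 := integral_nonneg fun x => sq_nonneg _
  refine Real.sqrt_le_iff.2 ⟨by positivity, ?_⟩
  rw [mul_pow, Real.sq_sqrt hN]
  refine key.trans (mul_le_mul_of_nonneg_right ?_ hN)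
  have hinv : 1 / ρ ≤ γ * h⁻¹ := by
    rw [← div_eq_mul_inv, div_le_div_iff₀ hρ hh]; linarith
  calc 1152 * (k : ℝ) ^ 4 / ρ ^ 2 = 1152 * (k : ℝ) ^ 4 * (1 / ρ) ^ 2 := by ring
    _ ≤ 1156 * (k : ℝ) ^ 4 * (γ * h⁻¹) ^ 2 := by gcongr; norm_num
    _ = _ := by ring
end

section
/- For every γ ≥ 1 there exists a constant C > 0, depending only on γ and in particular independent of the polynomial degree k and of the triangle, such that for every natural number k ≥ 1, every γ-shape-regular triangle T ⊆ ℝ² with diameter h_T, and every real bivariate polynomial v of total degree at most k, one has ‖v‖_{L²(∂T)} ≤ C k h_T^{−1/2} ‖v‖_{L²(T)}, where ∂T is the topological boundary of T equipped with one-dimensional Hausdorff measure. -/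
/-!
The estimate is reduced to the one-dimensional inequality
`p(0)² ≤ (k + 1)² ∫₀¹ p²` for polynomials `p` of degree at most `k`
(`eval_zero_sq_le_integral`).

*One dimension.* The polynomial `q = ∑ⱼ (-1)ʲ C(k,j) Q(j) xʲ`, `Q(x) = ∏_{i<k} (x + i + 2)`, represents
evaluation at `0` on polynomials of degree at most `k`: `∫₀¹ q p = (k! / (k+1)) p(0)`. Indeed
`∫₀¹ q xᵐ = ∑ⱼ (-1)ʲ C(k,j) Q(j) / (j + m + 1)`, and for `1 ≤ m ≤ k` the denominator divides `Q`, so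
that the sum is a `k`-th finite difference of a polynomial of degree `k - 1`, hence zero. Since
`q(0) = (k+1)!`, the Cauchy-Schwarz inequality gives the constant `(k+1)²`.

*The triangle.* Let `A` be a vertex, `u` and `w` the halves of the two edge vectors at `A`. The
parallelogram `A + [0,1] u + [0,1] w` lies in `T`, and one of its sides is the half of an edge next
to `A`. Applying the one-dimensional inequality along `w` and integrating along `u` bounds the
integral over this half edge (`corner_estimate`). The Jacobian of `(s, t) ↦ A + s u + t w` enters
only through `T ⊆ A + [0,2] u + [0,2] w`, which bounds its inverse by `4 / |T|`; and `|T| ≥ π ρ²`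
since `T` contains a ball of radius `ρ ≥ h_T / γ`. The boundary is covered by six such half edges.
-/

open MeasureTheory MvPolynomial

/-! ### The one-dimensional inequality -/

/-- The `k`-th finite difference of a polynomial of degree less than `k` vanishes. -/
lemma alternating_sum_choose_mul_eval {k : ℕ} {P : Polynomial ℝ} (hP : P.natDegree < k) :
    ∑ j ∈ Finset.range (k + 1), (-1 : ℝ) ^ j * (k.choose j) * P.eval (j : ℝ) = 0 := by
  have h := congrFun (Polynomial.fwdDiff_iter_eq_zero_of_degree_lt hP) 0
  rw [fwdDiff_iter_eq_sum_shift] at h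
  have h2 : (-1 : ℝ) ^ k * ∑ j ∈ Finset.range (k + 1), (-1 : ℝ) ^ j * (k.choose j) * P.eval (j : ℝ)
      = 0 := by
    rw [← h.trans (Pi.zero_apply _), Finset.mul_sum]
    refine Finset.sum_congr rfl fun j hj => ?_
    have hj' : j ≤ k := by simpa [Nat.lt_succ_iff] using hj
    have : (-1 : ℝ) ^ k * (-1) ^ j = (-1) ^ (k - j) := by
      obtain ⟨d, rfl⟩ := Nat.exists_eq_add_of_le hj'
      rw [Nat.add_sub_cancel_left, pow_add]
      have : (-1 : ℝ) ^ j * (-1) ^ j = 1 := by rw [← mul_pow]; simp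
      linear_combination (-1 : ℝ) ^ d * this
    simp [← this, zsmul_eq_mul]
    ring
  exact (mul_eq_zero.1 h2).resolve_left (by positivity)

/-- The polynomial `Q(x) = (x + 2)(x + 3) ⋯ (x + k + 1)`, whose values at `0, …, k` enter the
coefficients of `radau k`. -/
noncomputable def radauFactor (k : ℕ) : Polynomial ℝ :=
  ∏ i ∈ Finset.range k, (Polynomial.X + Polynomial.C ((i : ℝ) + 2))

/-- The polynomial of degree `k` that is orthogonal, for the weight `x` on `[0, 1]`, to all
polynomials of degree less than `k`, normalised by the value `(k + 1)!` at `0`. (Its roots are the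
interior nodes of Gauss-Radau quadrature.) Up to a scalar it represents evaluation at `0`, see
`integral_radau_mul`. -/
noncomputable def radau (k : ℕ) : Polynomial ℝ :=
  ∑ j ∈ Finset.range (k + 1),
    Polynomial.C ((-1 : ℝ) ^ j * (k.choose j) * (radauFactor k).eval (j : ℝ)) * Polynomial.X ^ j

lemma integral_radau_mul_pow (k m : ℕ) :
    ∫ x in (0 : ℝ)..1, (radau k).eval x * x ^ m =
      ∑ j ∈ Finset.range (k + 1),
        (-1 : ℝ) ^ j * (k.choose j) * ((radauFactor k).eval (j : ℝ) / (j + m + 1)) := by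
  simp only [radau, Polynomial.eval_finsetSum, Finset.sum_mul]
  rw [intervalIntegral.integral_finsetSum]
  · refine Finset.sum_congr rfl fun j _ => ?_
    simp only [Polynomial.eval_mul, Polynomial.eval_C, Polynomial.eval_pow, Polynomial.eval_X, mul_assoc, ← pow_add,
      intervalIntegral.integral_const_mul, integral_pow]
    push_cast
    rw [one_pow, zero_pow (by omega), sub_zero]
    ring
  · intro i _
    exact Continuous.intervalIntegrable (by fun_prop) _ _

lemma natDegree_radauFactor (k : ℕ) : (radauFactor k).natDegree = k := by
  rw [radauFactor, Polynomial.natDegree_prod_of_monic _ _ fun i _ => Polynomial.monic_X_add_C _]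
  simp only [Polynomial.natDegree_X_add_C]
  simp

/-- The factor `x + m + 2` of `Q` cancels the denominator `j + (m + 1) + 1` of the moment, leaving a
finite difference that vanishes. -/
lemma integral_radau_mul_pow_eq_zero {k m : ℕ} (hm : m < k) :
    ∫ x in (0 : ℝ)..1, (radau k).eval x * x ^ (m + 1) = 0 := by
  rw [integral_radau_mul_pow]
  set P : Polynomial ℝ :=
  ∏ i ∈ (Finset.range k).erase m, (Polynomial.X + Polynomial.C ((i : ℝ) + 2)) with hP
  have hdeg : P.natDegree < k := by
    rw [hP, Polynomial.natDegree_prod_of_monic _ _ fun i _ => Polynomial.monic_X_add_C _]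
    simp only [Polynomial.natDegree_X_add_C]
    simp [hm]; omega
  rw [← alternating_sum_choose_mul_eval hdeg]
  refine Finset.sum_congr rfl fun j _ => ?_
  have : radauFactor k = (Polynomial.X + Polynomial.C ((m : ℝ) + 2)) * P :=
    (Finset.mul_prod_erase _ _ (Finset.mem_range.2 hm)).symm
  rw [this]
  have h0 : (j : ℝ) + (m + 1 : ℕ) + 1 ≠ 0 := by positivity
  congr 1
  rw [div_eq_iff h0]
  simp
  ring

lemma radauFactor_eval_zero (k : ℕ) : (radauFactor k).eval 0 = (k + 1).factorial := by
  rw [radauFactor, Polynomial.eval_prod]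
  induction k with
  | zero => simp
  | succ n ih =>
    rw [Finset.prod_range_succ, ih, Nat.factorial_succ (n + 1)]; push_cast; simp; ring

lemma radauFactor_eval_neg_one (k : ℕ) : (radauFactor k).eval (-1) = k.factorial := by
  rw [radauFactor, Polynomial.eval_prod]
  induction k with
  | zero => simp
  | succ n ih =>
    rw [Finset.prod_range_succ, ih, Nat.factorial_succ n]; push_cast; simp; ring

lemma radau_eval_zero (k : ℕ) : (radau k).eval 0 = (k + 1).factorial := by
  rw [radau, Polynomial.eval_finsetSum, Finset.sum_eq_single 0]
  · simp [radauFactor_eval_zero]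
  · intro j _ hj; simp [hj]
  · simp

lemma alternating_sum_choose_div (k : ℕ) :
    ∑ j ∈ Finset.range (k + 1), (-1 : ℝ) ^ j * (k.choose j) * (1 / (j + 1)) = 1 / (k + 1) := by
  have h := congrArg (Int.cast : ℤ → ℝ)
    (Int.alternating_sum_range_choose_of_ne (n := k + 1) (by omega))
  rw [Finset.sum_range_succ'] at h
  push_cast at h
  have h' : ∑ j ∈ Finset.range (k + 1), (-1 : ℝ) ^ j * ((k + 1).choose (j + 1) : ℝ) = 1 := by
    simp only [pow_succ] at h
    simp at h
    linarith
  rw [eq_div_iff (by positivity)]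
  refine Eq.trans ?_ h'
  rw [Finset.sum_mul]
  refine Finset.sum_congr rfl fun j _ => ?_
  have h3 : ((k + 1 : ℕ) : ℝ) * (k.choose j) = ((k + 1).choose (j + 1)) * ((j + 1 : ℕ) : ℝ) := by
    exact_mod_cast Nat.add_one_mul_choose_eq k j
  push_cast at h3
  field_simp
  linear_combination h3

/-- Writing `Q(x) = Q(-1) + (x + 1) R(x)`, the part with `R` is a vanishing finite difference. -/
lemma integral_radau {k : ℕ} (hk : 1 ≤ k) :
    ∫ x in (0 : ℝ)..1, (radau k).eval x = k.factorial / (k + 1) := by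
  have h := integral_radau_mul_pow k 0
  simp only [pow_zero, mul_one, Nat.cast_zero, add_zero] at h
  rw [h]
  set R := (radauFactor k).divByMonic (Polynomial.X - Polynomial.C (-1)) with hR
  have hdeg : R.natDegree < k := by
    rw [hR, Polynomial.natDegree_divByMonic _ (Polynomial.monic_X_sub_C _), natDegree_radauFactor,
      Polynomial.natDegree_X_sub_C]
    omega
  have hQ : ∀ x : ℝ, (radauFactor k).eval x = k.factorial + (x + 1) * R.eval x := by
    intro x
    conv_lhs => rw [← Polynomial.modByMonic_add_div (radauFactor k) (Polynomial.X - Polynomial.C (-1)), Polynomial.modByMonic_X_sub_C_eq_C_eval,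
      radauFactor_eval_neg_one]
    simp [hR]
  have h1 := alternating_sum_choose_div k
  have h2 := alternating_sum_choose_mul_eval hdeg
  calc _ = (k.factorial : ℝ) * ∑ j ∈ Finset.range (k + 1), (-1 : ℝ) ^ j * (k.choose j) * (1 / (j + 1))
        + ∑ j ∈ Finset.range (k + 1), (-1 : ℝ) ^ j * (k.choose j) * R.eval (j : ℝ) := by
        rw [Finset.mul_sum, ← Finset.sum_add_distrib]
        refine Finset.sum_congr rfl fun j _ => ?_
        rw [hQ]
        field_simp
    _ = _ := by rw [h1, h2]; ring

/-- `radau k` represents a multiple of the evaluation at `0` on polynomials of degree at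
most `k`. -/
lemma integral_radau_mul {k : ℕ} (hk : 1 ≤ k) {p : Polynomial ℝ} (hp : p.natDegree ≤ k) :
    ∫ x in (0 : ℝ)..1, (radau k).eval x * p.eval x = k.factorial / (k + 1) * p.eval 0 := by
  have hp' : ∀ x : ℝ, (radau k).eval x * p.eval x = p.coeff 0 * (radau k).eval x +
      ∑ m ∈ Finset.range k, p.coeff (m + 1) * ((radau k).eval x * x ^ (m + 1)) := by
    intro x
    rw [Polynomial.eval_eq_sum_range' (Nat.lt_succ_of_le hp), Finset.sum_range_succ', mul_add, Finset.mul_sum,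
      add_comm]
    congr 1
    · simp; ring
    · exact Finset.sum_congr rfl fun j _ => by ring
  simp only [hp']
  rw [intervalIntegral.integral_add (Continuous.intervalIntegrable (by fun_prop) _ _)
    (Continuous.intervalIntegrable (by fun_prop) _ _), intervalIntegral.integral_finsetSum
    fun i _ => Continuous.intervalIntegrable (by fun_prop) _ _]
  simp only [intervalIntegral.integral_const_mul, integral_radau hk]
  rw [Finset.sum_eq_zero fun m hm => by
    rw [integral_radau_mul_pow_eq_zero (Finset.mem_range.1 hm), mul_zero]]
  rw [Polynomial.coeff_zero_eq_eval_zero]; ring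

lemma natDegree_radau_le (k : ℕ) : (radau k).natDegree ≤ k := by
  refine Polynomial.natDegree_sum_le_of_forall_le _ _ fun j hj => ?_
  exact (Polynomial.natDegree_C_mul_X_pow_le _ _).trans (by simpa [Nat.lt_succ_iff] using hj)

/-- The one-dimensional inverse inequality; `(k + 1)²` is the optimal constant. -/
lemma eval_zero_sq_le_integral {k : ℕ} (hk : 1 ≤ k) {p : Polynomial ℝ} (hp : p.natDegree ≤ k) :
    (p.eval 0) ^ 2 ≤ ((k : ℝ) + 1) ^ 2 * ∫ x in (0 : ℝ)..1, (p.eval x) ^ 2 := by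
  have hqp := integral_radau_mul hk hp
  have hqq := integral_radau_mul hk (natDegree_radau_le k)
  rw [radau_eval_zero] at hqq
  set a : ℝ := k.factorial / (k + 1) with ha
  have ha0 : 0 < a := by positivity
  have hfac : ((k + 1).factorial : ℝ) = a * (k + 1) ^ 2 := by
    rw [ha, Nat.factorial_succ]; push_cast; field_simp
  rw [hfac] at hqq
  set c : ℝ := p.eval 0 / (a * (k + 1) ^ 2) with hc
  -- expand `0 ≤ ∫ (p - c q)²` at the minimising `c`
  have h0 : 0 ≤ ∫ x in (0 : ℝ)..1, (p.eval x - c * (radau k).eval x) ^ 2 :=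
    intervalIntegral.integral_nonneg zero_le_one fun x _ => sq_nonneg _
  have hexp : ∫ x in (0 : ℝ)..1, (p.eval x - c * (radau k).eval x) ^ 2 =
      (∫ x in (0 : ℝ)..1, (p.eval x) ^ 2) - 2 * c * (a * p.eval 0)
        + c ^ 2 * (a * (a * (k + 1) ^ 2)) := by
    rw [← hqp, ← hqq, ← intervalIntegral.integral_const_mul, ← intervalIntegral.integral_const_mul,
      ← intervalIntegral.integral_sub, ← intervalIntegral.integral_add]
    · congr 1; ext x; ring
    all_goals exact Continuous.intervalIntegrable (by fun_prop) _ _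
  rw [hexp] at h0
  have hca : c * a = p.eval 0 / (k + 1) ^ 2 := by rw [hc]; field_simp
  have : (p.eval 0) ^ 2 / (k + 1) ^ 2 ≤ ∫ x in (0 : ℝ)..1, (p.eval x) ^ 2 := by
    have e1 : 2 * c * (a * p.eval 0) = 2 * ((p.eval 0) ^ 2 / (k + 1) ^ 2) := by
      linear_combination 2 * p.eval 0 * hca
    have e2 : c ^ 2 * (a * (a * (k + 1) ^ 2)) = (p.eval 0) ^ 2 / (k + 1) ^ 2 := by
      have : c ^ 2 * (a * (a * (k + 1) ^ 2)) = (c * a) ^ 2 * (k + 1) ^ 2 := by ring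
      rw [this, hca]; field_simp
    linarith
  rw [div_le_iff₀ (by positivity)] at this
  linarith

/-! ### Parametrising segments and parallelograms -/

/-- The restriction of `v` to a line is a univariate polynomial of at most the same degree. -/
lemma exists_polynomial_on_line {k : ℕ} {v : MvPolynomial (Fin 2) ℝ} (hv : v.totalDegree ≤ k)
    (x w : EuclideanSpace ℝ (Fin 2)) : ∃ p : Polynomial ℝ, p.natDegree ≤ k ∧
      ∀ t : ℝ, p.eval t = eval (fun i => (x + t • w) i) v := by
  refine ⟨MvPolynomial.aeval (fun i => Polynomial.C (x i) + Polynomial.X * Polynomial.C (w i)) v,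
    ?_, fun t => ?_⟩
  · have := MvPolynomial.aeval_natDegree_le v hv
      (fun i => Polynomial.C (x i) + Polynomial.X * Polynomial.C (w i)) (n := 1) fun i => by
        compute_degree
    simpa using this
  · have h := MvPolynomial.eval₂_comp_left (Polynomial.evalRingHom t) (algebraMap ℝ (Polynomial ℝ))
      (fun i => Polynomial.C (x i) + Polynomial.X * Polynomial.C (w i)) v
    rw [MvPolynomial.aeval_def, ← Polynomial.coe_evalRingHom, h, MvPolynomial.eval]
    congr 1
    · ext; simp
    · ext i; simp; ring

lemma continuous_eval_coord (v : MvPolynomial (Fin 2) ℝ) :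
    Continuous fun x : EuclideanSpace ℝ (Fin 2) => eval (fun i => x i) v :=
  (MvPolynomial.continuous_eval v).comp (by fun_prop)

lemma setIntegral_segment_hausdorff (P : EuclideanSpace ℝ (Fin 2)) {u : EuclideanSpace ℝ (Fin 2)}
    (hu : u ≠ 0) (g : EuclideanSpace ℝ (Fin 2) → ℝ) :
    ∫ x in segment ℝ P (P + u), g x ∂(μH[1]) =
      ‖u‖ * ∫ s in Set.Icc (0 : ℝ) 1, g (P + s • u) := by
  set Γ : ℝ → EuclideanSpace ℝ (Fin 2) := fun s => P + s • u with hΓ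
  have hΓline : Γ = AffineMap.lineMap P (P + u) := by
    ext s i; simp [hΓ, AffineMap.lineMap_apply]; ring
  have hinj : Function.Injective Γ := fun a b hab => by
    have : a • u = b • u := add_left_cancel hab
    exact smul_left_injective ℝ hu this
  have hemb : MeasurableEmbedding Γ :=
    Continuous.measurableEmbedding (by fun_prop) hinj
  have hcomap : (μH[1] : Measure (EuclideanSpace ℝ (Fin 2))).comap Γ = ‖u‖₊ • volume := by
    ext s hs
    rw [hemb.comap_apply, hΓline, hausdorffMeasure_lineMap_image, hausdorffMeasure_real,
      Measure.smul_apply]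
    congr 1
    simp [nndist_eq_nnnorm]
  have hseg : segment ℝ P (P + u) = Γ '' Set.Icc 0 1 := by
    rw [segment_eq_image', hΓ]
    simp
  have hsub : segment ℝ P (P + u) ⊆ Set.range Γ := hseg ▸ Set.image_subset_range _ _
  have hmeas : MeasurableSet (segment ℝ P (P + u)) := by
    rw [hseg]; exact hemb.measurableSet_image.2 measurableSet_Icc
  rw [← Set.inter_eq_left.2 hsub, ← Measure.restrict_restrict hmeas, ← hemb.map_comap,
    hemb.setIntegral_map, hcomap, Measure.restrict_smul, integral_smul_nnreal_measure, hseg,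
    hinj.preimage_image]
  rfl

/-- An affine parametrisation of the plane transports Lebesgue measure to a multiple of Lebesgue
measure, by uniqueness of Haar measure; the value of the factor `c` is not needed. -/
lemma map_affine_volume (P : EuclideanSpace ℝ (Fin 2)) {u w : EuclideanSpace ℝ (Fin 2)}
    (h : LinearIndependent ℝ ![u, w]) :
    MeasurableEmbedding (fun z : ℝ × ℝ => P + (z.1 • u + z.2 • w)) ∧
    ∃ c : NNReal, Measure.map (fun z : ℝ × ℝ => P + (z.1 • u + z.2 • w)) volume = c • volume := by
  set f : ℝ × ℝ →ₗ[ℝ] EuclideanSpace ℝ (Fin 2) :=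
    (LinearMap.toSpanSingleton ℝ (EuclideanSpace ℝ (Fin 2)) u).coprod (LinearMap.toSpanSingleton ℝ (EuclideanSpace ℝ (Fin 2)) w) with hf
  have hfz : ∀ z, f z = z.1 • u + z.2 • w := fun z => by simp [hf]
  have hinj : Function.Injective f := by
    rw [← LinearMap.ker_eq_bot, LinearMap.ker_eq_bot']
    intro z hz
    rw [hfz] at hz
    have := LinearIndependent.pair_iff.1 h _ _ hz
    exact Prod.ext this.1 this.2
  set e : (ℝ × ℝ) ≃L[ℝ] EuclideanSpace ℝ (Fin 2) :=
    (f.linearEquivOfInjective hinj (by simp)).toContinuousLinearEquiv with he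
  have hez : ∀ z, e z = z.1 • u + z.2 • w := fun z => by
    rw [← hfz]; rfl
  have hcomp : (fun z : ℝ × ℝ => P + (z.1 • u + z.2 • w)) = (fun x => P + x) ∘ e := by
    ext1 z; simp [hez]
  have hcont : Continuous (fun z : ℝ × ℝ => P + (z.1 • u + z.2 • w)) := by fun_prop
  refine ⟨hcont.measurableEmbedding ?_, ?_⟩
  · rw [hcomp]; exact (add_right_injective P).comp e.injective
  have hH : (Measure.map e (volume : Measure (ℝ × ℝ))).IsAddHaarMeasure :=
    e.isAddHaarMeasure_map _
  refine ⟨Measure.addHaarScalarFactor (Measure.map e volume) volume, ?_⟩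
  rw [hcomp, ← Measure.map_map (by fun_prop) e.continuous.measurable, map_add_left_eq_self]
  exact Measure.isAddLeftInvariant_eq_smul _ _

/-! ### Bounding the integral over half an edge -/

/-- If the parallelogram spanned by `u` and `w` at `P` lies in `T`, and its dilation by `2` from `P`
contains `T`, then the integral over the side `[P, P + u]` is controlled by the integral over `T`. -/
lemma corner_estimate {k : ℕ} (hk : 1 ≤ k) {v : MvPolynomial (Fin 2) ℝ} (hv : v.totalDegree ≤ k)
    {T : Set (EuclideanSpace ℝ (Fin 2))} (hT : IsCompact T) {P u w : EuclideanSpace ℝ (Fin 2)} (hlin : LinearIndependent ℝ ![u, w])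
    (hsub : ∀ s ∈ Set.Icc (0 : ℝ) 1, ∀ t ∈ Set.Icc (0 : ℝ) 1, P + (s • u + t • w) ∈ T)
    (hsup : ∀ x ∈ T, ∃ s ∈ Set.Icc (0 : ℝ) 2, ∃ t ∈ Set.Icc (0 : ℝ) 2, x = P + (s • u + t • w)) :
    volume.real T * ∫ x in segment ℝ P (P + u), (eval (fun i => x i) v) ^ 2 ∂(μH[1]) ≤
      4 * ‖u‖ * ((k : ℝ) + 1) ^ 2 * ∫ x in T, (eval (fun i => x i) v) ^ 2 := by
  obtain ⟨hemb, c, hc⟩ := map_affine_volume P hlin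
  set Φ : ℝ × ℝ → EuclideanSpace ℝ (Fin 2) := fun z => P + (z.1 • u + z.2 • w) with hΦ
  set g : EuclideanSpace ℝ (Fin 2) → ℝ := fun x => (eval (fun i => x i) v) ^ 2 with hg
  have hgc : Continuous g := (continuous_eval_coord v).pow 2
  have hg0 : ∀ x, 0 ≤ g x := fun x => sq_nonneg _
  have hΦc : Continuous Φ := by fun_prop
  have hu : u ≠ 0 := hlin.ne_zero 0
  set I : Set ℝ := Set.Icc 0 1 with hI
  have hsq : IsCompact (I ×ˢ I) := isCompact_Icc.prod isCompact_Icc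
  have hint : IntegrableOn (fun z => g (Φ z)) (I ×ˢ I) :=
    (hgc.comp hΦc).continuousOn.integrableOn_compact hsq
  have hint' : Integrable (fun z => g (Φ z)) ((volume.restrict I).prod (volume.restrict I)) := by
    rw [Measure.prod_restrict]; exact hint
  have hgT : IntegrableOn g T := hgc.continuousOn.integrableOn_compact hT
  -- `Φ⁻¹ T` lies in a square of area `4`, which bounds the factor `c`
  have hcT : (c : ℝ) * volume.real T ≤ 4 := by
    have h1 : (c • (volume : Measure (EuclideanSpace ℝ (Fin 2)))) T ≤ 4 := by
      rw [← hc, hemb.map_apply]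
      have : Φ ⁻¹' T ⊆ Set.Icc (0 : ℝ) 2 ×ˢ Set.Icc (0 : ℝ) 2 := by
        rintro z hz
        obtain ⟨s, hs, t, ht, hst⟩ := hsup _ hz
        have : z = (s, t) := hemb.injective hst
        rw [this]; exact ⟨hs, ht⟩
      refine (measure_mono this).trans ?_
      rw [Measure.volume_eq_prod, Measure.prod_prod, Real.volume_Icc]
      norm_num [← ENNReal.ofReal_mul]
    have h2 := ENNReal.toReal_mono (by norm_num) h1
    rw [Measure.smul_apply, ENNReal.smul_def, smul_eq_mul, ENNReal.toReal_mul,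
      ENNReal.coe_toReal] at h2
    exact h2.trans (by norm_num)
  have hline : ∀ s : ℝ, g (P + s • u) ≤ ((k : ℝ) + 1) ^ 2 * ∫ t in I, g (Φ (s, t)) := by
    intro s
    obtain ⟨p, hp, hpe⟩ := exists_polynomial_on_line hv (P + s • u) w
    have := eval_zero_sq_le_integral hk hp
    rw [intervalIntegral.integral_of_le zero_le_one, ← integral_Icc_eq_integral_Ioc] at this
    rw [hpe, zero_smul, add_zero] at this
    refine this.trans_eq ?_
    congr 1
    refine integral_congr_ae (Filter.Eventually.of_forall fun t => ?_)
    simp only [hg, hΦ]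
    rw [hpe, add_assoc]
  -- Fubini on the parallelogram
  have hedge : ∫ s in I, g (P + s • u) ≤ ((k : ℝ) + 1) ^ 2 * ∫ z in I ×ˢ I, g (Φ z) := by
    rw [Measure.volume_eq_prod, setIntegral_prod _ hint, ← integral_const_mul]
    refine integral_mono ?_ ?_ hline
    · exact (hgc.comp (by fun_prop)).continuousOn.integrableOn_compact isCompact_Icc
    · exact hint'.integral_prod_left.const_mul _
  have hcov : ∫ z in I ×ˢ I, g (Φ z) ≤ c * ∫ x in T, g x := by
    have h1 : ∫ z in Φ ⁻¹' T, g (Φ z) = c * ∫ x in T, g x := by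
      rw [← hemb.setIntegral_map, hc, Measure.restrict_smul, integral_smul_nnreal_measure]
      rfl
    have h2 : IntegrableOn (fun z => g (Φ z)) (Φ ⁻¹' T) := by
      have := (hgT.integrable.smul_measure_nnreal (c := c))
      rw [← Measure.restrict_smul, ← hc] at this
      exact (hemb.integrableOn_map_iff).1 this
    rw [← h1]
    exact setIntegral_mono_set h2 (Filter.Eventually.of_forall fun z => hg0 _)
      (Filter.Eventually.of_forall fun z hz => hsub _ hz.1 _ hz.2)
  rw [setIntegral_segment_hausdorff P hu g]
  have hT0 : 0 ≤ ∫ x in T, g x := integral_nonneg hg0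
  have hV : 0 ≤ volume.real T := measureReal_nonneg
  calc volume.real T * (‖u‖ * ∫ s in I, g (P + s • u))
      ≤ volume.real T * (‖u‖ * (((k : ℝ) + 1) ^ 2 * (c * ∫ x in T, g x))) := by
        gcongr
        exact hedge.trans (by gcongr)
    _ = (c * volume.real T) * (‖u‖ * ((k : ℝ) + 1) ^ 2 * ∫ x in T, g x) := by ring
    _ ≤ 4 * (‖u‖ * ((k : ℝ) + 1) ^ 2 * ∫ x in T, g x) := by gcongr
    _ = _ := by ring

lemma linearIndependent_sub_swap {A B D : EuclideanSpace ℝ (Fin 2)}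
    (h : LinearIndependent ℝ ![B - A, D - A]) : LinearIndependent ℝ ![A - B, D - B] := by
  rw [LinearIndependent.pair_iff] at h ⊢
  intro s t hst
  have := h (-s - t) t (by rw [← hst]; module)
  exact ⟨by linarith [this.1, this.2], this.2⟩

lemma mem_convexHull_triple {A B D : EuclideanSpace ℝ (Fin 2)} {x : EuclideanSpace ℝ (Fin 2)} :
    x ∈ convexHull ℝ {A, B, D} ↔ ∃ a b d : ℝ, 0 ≤ a ∧ 0 ≤ b ∧ 0 ≤ d ∧ a + b + d = 1 ∧
      x = a • A + b • B + d • D := by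
  constructor
  · rw [← convexJoin_singleton_segment, mem_convexJoin]
    rintro ⟨_, rfl, y, ⟨b, d, hb, hd, hbd, rfl⟩, a, c, ha, hc, hac, rfl⟩
    refine ⟨a, c * b, c * d, ha, by positivity, by positivity, ?_, by module⟩
    linear_combination hac + c * hbd
  · rintro ⟨a, b, d, ha, hb, hd, h, rfl⟩
    have hc := convex_convexHull ℝ ({A, B, D} : Set (EuclideanSpace ℝ (Fin 2)))
    have := hc.sum_mem (t := Finset.univ) (w := ![a, b, d]) (z := ![A, B, D])
      (by intro i _; fin_cases i <;> simpa) (by simp [Fin.sum_univ_three, h])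
      (by intro i _; apply subset_convexHull; fin_cases i <;> simp)
    simpa [Fin.sum_univ_three] using this

/-- `corner_estimate` for the halves of the edge vectors at the vertex `A` of a triangle. -/
lemma half_edge_estimate {k : ℕ} (hk : 1 ≤ k) {v : MvPolynomial (Fin 2) ℝ}
    (hv : v.totalDegree ≤ k) {T : Set (EuclideanSpace ℝ (Fin 2))}
    {A B D : EuclideanSpace ℝ (Fin 2)} (hT : T = convexHull ℝ {A, B, D})
    (hlin : LinearIndependent ℝ ![B - A, D - A]) :
    volume.real T * ∫ x in segment ℝ A (midpoint ℝ A B), (eval (fun i => x i) v) ^ 2 ∂(μH[1]) ≤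
      2 * Metric.diam T * ((k : ℝ) + 1) ^ 2 * ∫ x in T, (eval (fun i => x i) v) ^ 2 := by
  have hTc : IsCompact T := by
    rw [hT]; exact (Set.toFinite _).isCompact_convexHull ℝ
  have hlin' : LinearIndependent ℝ ![(2⁻¹ : ℝ) • (B - A), (2⁻¹ : ℝ) • (D - A)] := by
    rw [LinearIndependent.pair_iff] at hlin ⊢
    intro s t hst
    have := hlin (s * 2⁻¹) (t * 2⁻¹) (by rw [← hst]; module)
    exact ⟨by linarith [this.1], by linarith [this.2]⟩
  have hmid : A + (2⁻¹ : ℝ) • (B - A) = midpoint ℝ A B := by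
    rw [midpoint_eq_smul_add, invOf_eq_inv]; module
  have h := corner_estimate hk hv hTc (P := A) hlin' ?_ ?_
  · rw [hmid, norm_smul] at h
    have hBA : ‖B - A‖ ≤ Metric.diam T := by
      rw [← dist_eq_norm]
      refine Metric.dist_le_diam_of_mem hTc.isBounded ?_ ?_ <;> rw [hT] <;>
        apply subset_convexHull <;> simp
    refine h.trans (mul_le_mul_of_nonneg_right ?_ (integral_nonneg fun x => sq_nonneg _))
    refine mul_le_mul_of_nonneg_right ?_ (by positivity)
    norm_num
    linarith
  · rintro s ⟨hs0, hs1⟩ t ⟨ht0, ht1⟩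
    rw [hT, mem_convexHull_triple]
    exact ⟨1 - s / 2 - t / 2, s / 2, t / 2, by linarith, by linarith, by linarith, by ring,
      by module⟩
  · intro x hx
    rw [hT, mem_convexHull_triple] at hx
    obtain ⟨a, b, d, ha, hb, hd, hsum, rfl⟩ := hx
    refine ⟨2 * b, ⟨by linarith, by linarith⟩, 2 * d, ⟨by linarith, by linarith⟩, ?_⟩
    obtain rfl : a = 1 - b - d := by linarith
    module

/-! ### The boundary of the triangle -/

lemma frontier_convexHull_triple_subset {A B D : EuclideanSpace ℝ (Fin 2)}
    (h : AffineIndependent ℝ ![A, B, D]) :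
    frontier (convexHull ℝ {A, B, D}) ⊆ segment ℝ A B ∪ segment ℝ B D ∪ segment ℝ A D := by
  have hspan : affineSpan ℝ (Set.range ![A, B, D]) = ⊤ := by
    rw [h.affineSpan_eq_top_iff_card_eq_finrank_add_one]; simp
  set b : AffineBasis (Fin 3) ℝ (EuclideanSpace ℝ (Fin 2)) := ⟨![A, B, D], h, hspan⟩ with hb
  have hbA : b 0 = A := rfl
  have hbB : b 1 = B := rfl
  have hbD : b 2 = D := rfl
  have hrange : Set.range b = {A, B, D} := by
    ext x; simp [Fin.exists_fin_succ, hbA, hbB, hbD, eq_comm]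
  have hclosed : IsClosed (convexHull ℝ ({A, B, D} : Set (EuclideanSpace ℝ (Fin 2)))) :=
    (Set.toFinite _).isClosed_convexHull ℝ
  intro x hx
  rw [hclosed.frontier_eq, ← hrange, b.interior_convexHull, b.convexHull_eq_nonneg_coord] at hx
  obtain ⟨hx0, hx1⟩ := hx
  have hsum := b.sum_coord_apply_eq_one x
  have hcomb := b.linear_combination_coord_eq_self x
  simp only [Fin.sum_univ_three, hbA, hbB, hbD] at hsum hcomb
  simp only [Set.mem_ofPred_eq, not_forall, not_lt] at hx0 hx1
  obtain ⟨i, hi⟩ := hx1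
  have hi0 : b.coord i x = 0 := le_antisymm hi (hx0 i)
  fin_cases i
  · refine Or.inl (Or.inr ⟨b.coord 1 x, b.coord 2 x, hx0 1, hx0 2, ?_, ?_⟩)
    · simpa [show b.coord 0 x = 0 from hi0] using hsum
    · simpa [show b.coord 0 x = 0 from hi0] using hcomb
  · refine Or.inr ⟨b.coord 0 x, b.coord 2 x, hx0 0, hx0 2, ?_, ?_⟩
    · simpa [show b.coord 1 x = 0 from hi0] using hsum
    · simpa [show b.coord 1 x = 0 from hi0] using hcomb
  · refine Or.inl (Or.inl ⟨b.coord 0 x, b.coord 1 x, hx0 0, hx0 1, ?_, ?_⟩)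
    · simpa [show b.coord 2 x = 0 from hi0] using hsum
    · simpa [show b.coord 2 x = 0 from hi0] using hcomb

lemma segment_subset_union_midpoint (A B : EuclideanSpace ℝ (Fin 2)) :
    segment ℝ A B ⊆ segment ℝ A (midpoint ℝ A B) ∪ segment ℝ B (midpoint ℝ B A) := by
  rintro _ ⟨a, b, ha, hb, hab, rfl⟩
  have hm : midpoint ℝ A B = (2⁻¹ : ℝ) • A + (2⁻¹ : ℝ) • B := by
    rw [midpoint_eq_smul_add, invOf_eq_inv]; module
  rw [midpoint_comm B A, hm]
  obtain rfl : a = 1 - b := by linarith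
  rcases le_total b (1 - b) with h | h
  · exact Or.inl ⟨1 - 2 * b, 2 * b, by linarith, by linarith, by ring, by module⟩
  · exact Or.inr ⟨2 * b - 1, 2 - 2 * b, by linarith, by linarith, by ring, by module⟩

lemma integrableOn_segment_hausdorff (v : MvPolynomial (Fin 2) ℝ)
    (A B : EuclideanSpace ℝ (Fin 2)) :
    IntegrableOn (fun x => (eval (fun i => x i) v) ^ 2) (segment ℝ A B) (μH[1]) := by
  have hcomp : IsCompact (segment ℝ A B) := by
    rw [← convexHull_pair]; exact (Set.toFinite _).isCompact_convexHull ℝ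
  refine ContinuousOn.integrableOn_of_subset_isCompact (K := segment ℝ A B)
    ((continuous_eval_coord v).pow 2).continuousOn hcomp hcomp.measurableSet subset_rfl ?_
  rw [hausdorffMeasure_segment]
  exact (edist_ne_top A B)

lemma setIntegral_union_le {s t : Set (EuclideanSpace ℝ (Fin 2))}
    {f : EuclideanSpace ℝ (Fin 2) → ℝ} {μ : Measure (EuclideanSpace ℝ (Fin 2))} {a b : ℝ}
    (hf : ∀ x, 0 ≤ f x) (hs : IntegrableOn f s μ ∧ ∫ x in s, f x ∂μ ≤ a)
    (ht : IntegrableOn f t μ ∧ ∫ x in t, f x ∂μ ≤ b) :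
    IntegrableOn f (s ∪ t) μ ∧ ∫ x in s ∪ t, f x ∂μ ≤ a + b := by
  refine ⟨hs.1.union ht.1, ?_⟩
  calc ∫ x in s ∪ t, f x ∂μ ≤ ∫ x, f x ∂(μ.restrict s + μ.restrict t) :=
        integral_mono_measure (Measure.restrict_union_le _ _)
          (Filter.Eventually.of_forall hf) (Integrable.add_measure hs.1 ht.1)
    _ = ∫ x in s, f x ∂μ + ∫ x in t, f x ∂μ := integral_add_measure hs.1 ht.1
    _ ≤ a + b := add_le_add hs.2 ht.2

/-- hp inverse trace inequality on shape-regular triangles (Lemma 4.1, fourth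
estimate): for every `γ ≥ 1` there is `C > 0`, depending only on `γ`, such that
for every `k ≥ 1`, every `γ`-shape-regular triangle `T ⊆ ℝ²`, and every real
bivariate polynomial `v` of total degree at most `k`, one has
`‖v‖_{L²(∂T)} ≤ C k (diam T)^{-1/2} ‖v‖_{L²(T)}`, where the boundary `∂T` is
equipped with the one-dimensional Hausdorff measure. -/
theorem hp_inverse_trace_triangle (γ : ℝ) (hγ : 1 ≤ γ) :
    ∃ C : ℝ, 0 < C ∧
      ∀ (k : ℕ), 1 ≤ k →
        ∀ A B D : EuclideanSpace ℝ (Fin 2),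
          AffineIndependent ℝ ![A, B, D] →
          ∀ (x₀ : EuclideanSpace ℝ (Fin 2)) (ρ : ℝ), 0 < ρ →
            Metric.ball x₀ ρ ⊆ convexHull ℝ {A, B, D} →
            Metric.diam (convexHull ℝ {A, B, D} : Set (EuclideanSpace ℝ (Fin 2))) ≤ γ * ρ →
            ∀ v : MvPolynomial (Fin 2) ℝ, v.totalDegree ≤ k →
              Real.sqrt (∫ x in frontier (convexHull ℝ {A, B, D} : Set (EuclideanSpace ℝ (Fin 2))),
                  (eval (fun i => x i) v) ^ 2 ∂(μH[1])) ≤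
                C * (k : ℝ) *
                  (Metric.diam (convexHull ℝ {A, B, D} : Set (EuclideanSpace ℝ (Fin 2)))) ^ (-(1/2 : ℝ)) *
                  Real.sqrt (∫ x in (convexHull ℝ {A, B, D} : Set (EuclideanSpace ℝ (Fin 2))),
                    (eval (fun i => x i) v) ^ 2) := by
  -- six half edges, each contributing at most `8γ²k² / (3h) ∫_T v²`, sum up to `(4γ)² k² / h ∫_T v²`
  refine ⟨4 * γ, by linarith, ?_⟩
  intro k hk A B D hABD x₀ ρ hρ hball hdiam v hv
  set T : Set (EuclideanSpace ℝ (Fin 2)) := convexHull ℝ {A, B, D} with hT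
  set f : EuclideanSpace ℝ (Fin 2) → ℝ := fun x => (eval (fun i => x i) v) ^ 2 with hf
  set h : ℝ := Metric.diam T with hh
  set N : ℝ := ∫ x in T, f x with hN
  have hf0 : ∀ x, 0 ≤ f x := fun x => sq_nonneg _
  have hN0 : 0 ≤ N := integral_nonneg hf0
  have hTc : IsCompact T := (Set.toFinite _).isCompact_convexHull ℝ
  have hlin : LinearIndependent ℝ ![B - A, D - A] := by
    have := ((affineIndependent_iff_linearIndependent_vsub ℝ _ (0 : Fin 3)).1 hABD).comp
      ![⟨1, by decide⟩, ⟨2, by decide⟩]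
      (by intro i j hij; fin_cases i <;> fin_cases j <;> simp_all)
    have hfam : ![B - A, D - A] =
        (fun i : {x : Fin 3 // x ≠ 0} => ![A, B, D] i -ᵥ ![A, B, D] 0) ∘
          ![⟨1, by decide⟩, ⟨2, by decide⟩] := by
      ext i : 1
      fin_cases i <;> rfl
    rw [hfam]
    exact this
  have hpos : 0 < h := by
    have hne : A ≠ B := fun hAB => hlin.ne_zero 0 (by simp [hAB])
    refine (dist_pos.2 hne).trans_le (Metric.dist_le_diam_of_mem hTc.isBounded ?_ ?_) <;>
      apply subset_convexHull <;> simp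
  have hvol : 3 * ρ ^ 2 ≤ volume.real T := by
    have h1 : volume.real (Metric.ball x₀ ρ) ≤ volume.real T :=
      measureReal_mono hball hTc.measure_ne_top
    have h2 : volume.real (Metric.ball x₀ ρ) = ρ ^ 2 * Real.pi := by
      rw [Measure.real, EuclideanSpace.volume_ball_fin_two, ENNReal.toReal_mul, ENNReal.toReal_pow,
        ENNReal.toReal_ofReal hρ.le]
      rw [ENNReal.toReal_ofReal Real.pi_pos.le]
    nlinarith [Real.pi_gt_three, sq_nonneg ρ]
  have hk1 : (1 : ℝ) ≤ k := by exact_mod_cast hk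
  set b : ℝ := 8 * γ ^ 2 * k ^ 2 / (3 * h) * N with hb
  have key : ∀ A' B' D', T = convexHull ℝ {A', B', D'} →
      LinearIndependent ℝ ![B' - A', D' - A'] →
      IntegrableOn f (segment ℝ A' (midpoint ℝ A' B')) (μH[1]) ∧
        ∫ x in segment ℝ A' (midpoint ℝ A' B'), f x ∂(μH[1]) ≤ b := by
    intro A' B' D' hT' hlin'
    refine ⟨integrableOn_segment_hausdorff _ _ _, ?_⟩
    have h1 := half_edge_estimate hk hv hT' hlin'
    set J := ∫ x in segment ℝ A' (midpoint ℝ A' B'), f x ∂(μH[1]) with hJ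
    have hJ0 : 0 ≤ J := integral_nonneg hf0
    have h2 : 3 * ρ ^ 2 * J ≤ 8 * h * k ^ 2 * N := by
      calc 3 * ρ ^ 2 * J ≤ volume.real T * J := by gcongr
        _ ≤ 2 * h * ((k : ℝ) + 1) ^ 2 * N := h1
        _ ≤ 2 * h * ((k : ℝ) + k) ^ 2 * N := by gcongr
        _ = _ := by ring
    have h3 : 3 * h ^ 2 * J ≤ γ ^ 2 * (8 * h * k ^ 2 * N) := by
      calc 3 * h ^ 2 * J ≤ 3 * (γ * ρ) ^ 2 * J := by gcongr
        _ = γ ^ 2 * (3 * ρ ^ 2 * J) := by ring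
        _ ≤ _ := by gcongr
    have h4 : 3 * h * J ≤ 8 * γ ^ 2 * k ^ 2 * N := by
      refine le_of_mul_le_mul_left ?_ hpos
      linarith
    rw [hb, div_mul_eq_mul_div, le_div_iff₀ (by positivity)]
    linarith
  have e1 : ({A, B, D} : Set (EuclideanSpace ℝ (Fin 2))) = {B, A, D} := by
    ext; simp; tauto
  have e2 : ({A, B, D} : Set (EuclideanSpace ℝ (Fin 2))) = {B, D, A} := by
    ext; simp; tauto
  have e3 : ({A, B, D} : Set (EuclideanSpace ℝ (Fin 2))) = {D, B, A} := by
    ext; simp; tauto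
  have e4 : ({A, B, D} : Set (EuclideanSpace ℝ (Fin 2))) = {A, D, B} := by
    ext; simp; tauto
  have e5 : ({A, B, D} : Set (EuclideanSpace ℝ (Fin 2))) = {D, A, B} := by
    ext; simp; tauto
  have l1 := linearIndependent_sub_swap hlin
  have l2 := LinearIndependent.pair_symm_iff.1 l1
  have l3 := linearIndependent_sub_swap l2
  have l4 := LinearIndependent.pair_symm_iff.1 hlin
  have l5 := linearIndependent_sub_swap l4
  have hcover := (setIntegral_union_le hf0 (setIntegral_union_le hf0
    (setIntegral_union_le hf0 (key A B D rfl hlin) (key B A D (hT.trans (by rw [e1])) l1))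
    (setIntegral_union_le hf0 (key B D A (hT.trans (by rw [e2])) l2)
      (key D B A (hT.trans (by rw [e3])) l3)))
    (setIntegral_union_le hf0 (key A D B (hT.trans (by rw [e4])) l4)
      (key D A B (hT.trans (by rw [e5])) l5)))
  have hfront : ∫ x in frontier T, f x ∂(μH[1]) ≤ 16 * γ ^ 2 * k ^ 2 / h * N := by
    refine (setIntegral_mono_set hcover.1 (Filter.Eventually.of_forall hf0)
      (Filter.Eventually.of_forall ?_)).trans (hcover.2.trans_eq (by rw [hb]; field_simp; ring))
    exact (frontier_convexHull_triple_subset hABD).trans (Set.union_subset_union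
      (Set.union_subset_union (segment_subset_union_midpoint _ _)
        (segment_subset_union_midpoint _ _)) (segment_subset_union_midpoint _ _))
  refine (Real.sqrt_le_sqrt hfront).trans_eq ?_
  rw [Real.sqrt_mul (by positivity), Real.sqrt_div (by positivity)]
  congr 1
  rw [show 16 * γ ^ 2 * (k : ℝ) ^ 2 = (4 * γ * k) ^ 2 by ring, Real.sqrt_sq (by positivity),
    Real.rpow_neg hpos.le, ← Real.sqrt_eq_rpow, div_eq_mul_inv]
end
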